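/- arXiv:2206.04346 — 2 statements merged into one kernel-verified Lean document; each statement's English description precedes it below -/
import Mathlib

section
/- (Strong form of the Nehari–Schwarz lemma at an interior point) Let f be a nonconstant holomorphic function from the open unit disk 𝔻 into the closed unit disk, and let B be a finite Blaschke product such that every zero of B' in 𝔻 is a zero of f' of at least the same order. If |f'(z)| (1 − |B(z)|²) = |B'(z)| (1 − |f(z)|²) holds for some point z ∈ 𝔻 with B'(z) ≠ 0, then f = T ∘ B for some conformal automorphism T of 𝔻. -/
open Metric Filter

/-- The order of vanishing of `f` at `z`. -/
noncomputable def vOrder (f : ℂ → ℂ) (z : ℂ) : ℕ∞ :=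
  sInf ((fun n : ℕ => (n : ℕ∞)) '' {n : ℕ | iteratedDeriv n f z ≠ 0})

open scoped Topology ComplexConjugate

namespace NS

/-- Disk automorphism sending `a` to `0`. -/
noncomputable def mob (a u : ℂ) : ℂ := (u - a) / (1 - conj a * u)

lemma den_ne {a u : ℂ} (ha : ‖a‖ < 1) (hu : ‖u‖ ≤ 1) : 1 - conj a * u ≠ 0 := by
  intro h
  have h1 : conj a * u = 1 := by linear_combination -h
  have h2 : ‖a‖ * ‖u‖ = 1 := by simpa using congrArg norm h1
  nlinarith [norm_nonneg a, norm_nonneg u]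

lemma normSq_id (a u : ℂ) :
    ‖1 - conj a * u‖ ^ 2 - ‖u - a‖ ^ 2 = (1 - ‖a‖ ^ 2) * (1 - ‖u‖ ^ 2) := by
  simp only [← Complex.normSq_eq_norm_sq, Complex.normSq_apply]
  simp
  ring

lemma one_sub_mob {a u : ℂ} (ha : ‖a‖ < 1) (hu : ‖u‖ ≤ 1) :
    1 - ‖mob a u‖ ^ 2 = (1 - ‖a‖ ^ 2) / ‖1 - conj a * u‖ ^ 2 * (1 - ‖u‖ ^ 2) := by
  have h := den_ne ha hu
  have h' : ‖1 - conj a * u‖ ≠ 0 := by simpa using h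
  have hid := normSq_id a u
  rw [mob, norm_div]
  generalize ‖1 - conj a * u‖ = d at h' hid ⊢
  field_simp
  linarith

lemma one_sub_pos {a : ℂ} (ha : ‖a‖ < 1) : 0 < 1 - ‖a‖ ^ 2 := by
  nlinarith [norm_nonneg a]

lemma lt_one_of_pos {a : ℂ} (ha : 0 < 1 - ‖a‖ ^ 2) : ‖a‖ < 1 := by
  nlinarith [norm_nonneg a]

lemma norm_mob_lt {a u : ℂ} (ha : ‖a‖ < 1) (hu : ‖u‖ < 1) : ‖mob a u‖ < 1 := by
  apply lt_one_of_pos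
  rw [one_sub_mob ha hu.le]
  have := one_sub_pos ha
  have := one_sub_pos hu
  have : 0 < ‖1 - conj a * u‖ := by simpa using den_ne ha hu.le
  positivity

lemma mob_hasDerivAt {a u : ℂ} (ha : ‖a‖ < 1) (hu : ‖u‖ ≤ 1) :
    HasDerivAt (mob a) ((1 - (‖a‖ : ℂ) ^ 2) / (1 - conj a * u) ^ 2) u := by
  have h := den_ne ha hu
  have := ((hasDerivAt_id u).sub_const a).div
    (((hasDerivAt_id u).const_mul (conj a)).const_sub 1) h
  convert! this using 1
  rw [← Complex.conj_mul']
  simp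
  ring

lemma norm_fac {a : ℂ} (ha : ‖a‖ < 1) : ‖(1 - (‖a‖ : ℂ) ^ 2)‖ = 1 - ‖a‖ ^ 2 := by
  rw [show (1 - (‖a‖ : ℂ) ^ 2) = ((1 - ‖a‖ ^ 2 : ℝ) : ℂ) by push_cast; rfl, Complex.norm_real]
  exact abs_of_pos (one_sub_pos ha)

/-- Schwarz–Pick. -/
lemma schwarz_pick {f : ℂ → ℂ} (hd : ∀ z ∈ ball (0 : ℂ) 1, DifferentiableAt ℂ f z)
    (hf : ∀ z ∈ ball (0 : ℂ) 1, ‖f z‖ < 1) {w : ℂ} (hw : w ∈ ball (0 : ℂ) 1) :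
    ‖deriv f w‖ * (1 - ‖w‖ ^ 2) ≤ 1 - ‖f w‖ ^ 2 := by
  have hw' : ‖w‖ < 1 := by simpa using hw
  have hw'' : ‖-w‖ < 1 := by simpa using hw'
  set g : ℂ → ℂ := fun u => mob (f w) (f (mob (-w) u)) with hg
  have hmem : ∀ u ∈ ball (0 : ℂ) 1, mob (-w) u ∈ ball (0 : ℂ) 1 := fun u hu => by
    simpa using norm_mob_lt hw'' (by simpa using hu)
  have hm0 : mob (-w) 0 = w := by simp [mob]
  have hder : ∀ u ∈ ball (0 : ℂ) 1, HasDerivAt g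
      ((1 - (‖f w‖ : ℂ) ^ 2) / (1 - conj (f w) * f (mob (-w) u)) ^ 2 *
        (deriv f (mob (-w) u) * ((1 - (‖-w‖ : ℂ) ^ 2) / (1 - conj (-w) * u) ^ 2))) u := by
    intro u hu
    have h1 := mob_hasDerivAt hw'' (mem_ball_zero_iff.1 hu).le
    have h2 := (hd _ (hmem u hu)).hasDerivAt
    have h3 := mob_hasDerivAt (hf w hw) (hf _ (hmem u hu)).le
    exact h3.comp u (h2.comp u h1)
  have hg0 : g 0 = 0 := by simp [hg, mob]
  have key := Complex.norm_deriv_le_one_of_mapsTo_ball (f := g) (c := 0) (R := 1)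
    (fun u hu => (hder u hu).differentiableAt.differentiableWithinAt)
    (fun u hu => by
      rw [hg0]
      simpa using (norm_mob_lt (hf w hw) (hf _ (hmem u hu))).le) one_pos
  rw [(hder 0 (by simp)).deriv, hm0] at key
  have e : (1 - conj (f w) * f w) = 1 - (‖f w‖ : ℂ) ^ 2 := by rw [Complex.conj_mul']
  rw [e] at key
  simp only [norm_mul, norm_div, norm_pow, norm_fac (hf w hw), norm_fac hw''] at key
  have hp := one_sub_pos (hf w hw)
  simp at key
  have : (1 - ‖f w‖ ^ 2) / (1 - ‖f w‖ ^ 2) ^ 2 = 1 / (1 - ‖f w‖ ^ 2) := by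
    field_simp
  rw [this, one_div, inv_mul_le_iff₀ hp] at key
  linarith

/-- Class of finite Blaschke products, with the boundary information. -/
def Good (B : ℂ → ℂ) (F : ℂ → ℝ) : Prop :=
  (∀ w ∈ closedBall (0 : ℂ) 1, AnalyticAt ℂ B w) ∧
  ContinuousOn F (closedBall 0 1) ∧ (∀ w ∈ closedBall (0 : ℂ) 1, 0 ≤ F w) ∧
  (∀ w ∈ closedBall (0 : ℂ) 1, 1 - ‖B w‖ ^ 2 = F w * (1 - ‖w‖ ^ 2)) ∧
  (∀ w, ‖w‖ = 1 → w * deriv B w * conj (B w) = F w)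

lemma Good.mul {B₁ B₂ F₁ F₂} (h₁ : Good B₁ F₁) (h₂ : Good B₂ F₂) :
    Good (fun w => B₁ w * B₂ w) (fun w => F₁ w + ‖B₁ w‖ ^ 2 * F₂ w) := by
  obtain ⟨a1, c1, p1, e1, d1⟩ := h₁
  obtain ⟨a2, c2, p2, e2, d2⟩ := h₂
  refine ⟨fun w hw => (a1 w hw).mul (a2 w hw), ?_, ?_, ?_, ?_⟩
  · have : ContinuousOn B₁ (closedBall 0 1) := fun w hw => (a1 w hw).continuousAt.continuousWithinAt
    fun_prop
  · intro w hw
    have := p1 w hw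
    have := p2 w hw
    positivity
  · intro w hw
    rw [norm_mul]
    linear_combination e1 w hw + ‖B₁ w‖ ^ 2 * e2 w hw
  · intro w hw
    have hm : w ∈ closedBall (0 : ℂ) 1 := by simp [hw]
    have n1 : B₁ w * conj (B₁ w) = 1 := by
      have := e1 w hm
      rw [hw] at this
      rw [Complex.mul_conj']
      have h : ‖B₁ w‖ ^ 2 = 1 := by linarith
      exact_mod_cast h
    have n2 : B₂ w * conj (B₂ w) = 1 := by
      have := e2 w hm
      rw [hw] at this
      rw [Complex.mul_conj']
      have h : ‖B₂ w‖ ^ 2 = 1 := by linarith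
      exact_mod_cast h
    have := ((a1 w hm).differentiableAt.hasDerivAt.mul (a2 w hm).differentiableAt.hasDerivAt)
    have hd : deriv (fun w => B₁ w * B₂ w) w = deriv B₁ w * B₂ w + B₁ w * deriv B₂ w := this.deriv
    rw [hd]
    push_cast
    rw [← Complex.mul_conj', map_mul, n1, ← d1 w hw, ← d2 w hw]
    linear_combination (w * deriv B₁ w * conj (B₁ w)) * n2 + (w * deriv B₂ w * conj (B₂ w)) * n1

lemma good_const {η : ℂ} (hη : ‖η‖ = 1) : Good (fun _ => η) (fun _ => 0) := by
  refine ⟨fun w _ => analyticAt_const, continuousOn_const, fun _ _ => le_rfl, ?_, ?_⟩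
  · simp [hη]
  · simp

lemma good_factor {a : ℂ} (ha : ‖a‖ < 1) : Good (fun w => (a - w) / (1 - conj a * w))
    (fun w => (1 - ‖a‖ ^ 2) / ‖1 - conj a * w‖ ^ 2) := by
  have hE : (fun w => (a - w) / (1 - conj a * w)) = fun w => - mob a w := by
    funext w
    rw [mob, ← neg_div]
    ring
  have hle : ∀ w ∈ closedBall (0 : ℂ) 1, ‖w‖ ≤ 1 := fun w hw => by simpa using hw
  refine ⟨?_, ?_, ?_, ?_, ?_⟩
  · intro w hw
    have := den_ne ha (hle w hw)
    fun_prop (disch := assumption)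
  · refine ContinuousOn.div (by fun_prop) (by fun_prop) ?_
    intro w hw
    have := den_ne ha (hle w hw)
    simpa using this
  · intro w hw
    have := one_sub_pos ha
    positivity
  · intro w hw
    have := one_sub_mob ha (hle w hw)
    have hEw : (a - w) / (1 - conj a * w) = - mob a w := congrFun hE w
    simp only
    rw [hEw, norm_neg, this]
  · intro w hw
    have hd := den_ne ha hw.le
    have hd2 : 1 - a * conj w ≠ 0 := by
      intro h
      apply hd
      simpa using congrArg conj h
    have hw1 : w * conj w = 1 := by rw [Complex.mul_conj', hw]; simp
    have hw0 : conj w ≠ 0 := fun h => by simp [h] at hw1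
    rw [hE, (mob_hasDerivAt ha hw.le).fun_neg.deriv]
    push_cast
    rw [← Complex.mul_conj' (1 - conj a * w)]
    simp only [mob, map_neg, map_div₀, map_sub, map_mul, map_one, Complex.conj_conj]
    have hnum : w * (conj w - conj a) = 1 - conj a * w := by linear_combination hw1
    generalize (1 - (‖a‖ : ℂ) ^ 2) = c
    generalize 1 - a * conj w = e at hd2 ⊢
    generalize 1 - conj a * w = d at hd hnum ⊢
    field_simp
    linear_combination c * hnum

lemma good_prod {ι : Type*} (s : Finset ι) (a : ι → ℂ) (ha : ∀ j, ‖a j‖ < 1) :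
    ∃ F, Good (fun w => ∏ j ∈ s, (a j - w) / (1 - conj (a j) * w)) F := by
  classical
  induction s using Finset.induction_on with
  | empty => exact ⟨_, by simpa using good_const (η := 1) (by simp)⟩
  | insert i s hi ih =>
    obtain ⟨F, hF⟩ := ih
    refine ⟨fun w => (1 - ‖a i‖ ^ 2) / ‖1 - conj (a i) * w‖ ^ 2 +
        ‖(a i - w) / (1 - conj (a i) * w)‖ ^ 2 * F w, ?_⟩
    · have := (good_factor (ha i)).mul hF
      convert! this using 2 with w
      rw [Finset.prod_insert hi]

lemma good_blaschke {n : ℕ} (hn : n ≠ 0) {η : ℂ} (hη : ‖η‖ = 1) (a : Fin n → ℂ)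
    (ha : ∀ j, ‖a j‖ < 1) :
    ∃ F, Good (fun w => η * ∏ j, (a j - w) / (1 - conj (a j) * w)) F ∧
      ∀ w ∈ closedBall (0 : ℂ) 1, 0 < F w := by
  obtain ⟨n, rfl⟩ := Nat.exists_eq_succ_of_ne_zero hn
  obtain ⟨F, hF⟩ := good_prod Finset.univ (fun j : Fin n => a j.succ) (fun j => ha _)
  have h1 := (good_const hη).mul ((good_factor (ha 0)).mul hF)
  refine ⟨fun w => 0 + ‖η‖ ^ 2 * ((1 - ‖a 0‖ ^ 2) / ‖1 - conj (a 0) * w‖ ^ 2 +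
        ‖(a 0 - w) / (1 - conj (a 0) * w)‖ ^ 2 * F w), ?_, ?_⟩
  · convert! h1 using 2 with w
    rw [Fin.prod_univ_succ]
  · intro w hw
    have hw' : ‖w‖ ≤ 1 := by simpa using hw
    have := den_ne (ha 0) hw'
    have h2 : 0 < ‖1 - conj (a 0) * w‖ := by simpa using this
    have := one_sub_pos (ha 0)
    have := hF.2.2.1 w hw
    have : 0 ≤ ‖(a 0 - w) / (1 - (starRingEnd ℂ) (a 0) * w)‖ ^ 2 * F w := by positivity
    have : 0 < (1 - ‖a 0‖ ^ 2) / ‖1 - (starRingEnd ℂ) (a 0) * w‖ ^ 2 := by positivity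
    rw [hη]
    linarith

lemma boundary_est {B F} (h : Good B F) (hF : ∀ w ∈ closedBall (0 : ℂ) 1, 0 < F w) {ε : ℝ}
    (hε : 0 < ε) : ∃ r, 0 ≤ r ∧ r < 1 ∧ ∀ w : ℂ, r < ‖w‖ → ‖w‖ < 1 →
      1 - ‖B w‖ ^ 2 ≤ (1 + ε) * (‖deriv B w‖ * (1 - ‖w‖ ^ 2)) := by
  obtain ⟨an, cF, -, e, d⟩ := h
  have key : ∃ r, 0 ≤ r ∧ r < 1 ∧ ∀ w : ℂ, r < ‖w‖ → ‖w‖ < 1 → F w ≤ (1 + ε) * ‖deriv B w‖ := by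
    have hcG : ContinuousOn (fun w => (1 + ε) * ‖deriv B w‖ - F w) (closedBall 0 1) := by
      have : ContinuousOn (deriv B) (closedBall 0 1) :=
        fun w hw => (an w hw).deriv.continuousAt.continuousWithinAt
      fun_prop
    have hK : IsCompact (closedBall (0 : ℂ) 1 ∩
        (fun w => (1 + ε) * ‖deriv B w‖ - F w) ⁻¹' Set.Iic 0) :=
      (isCompact_closedBall _ _).of_isClosed_subset
        (hcG.preimage_isClosed_of_isClosed isClosed_closedBall isClosed_Iic) Set.inter_subset_left
    rcases Set.eq_empty_or_nonempty (closedBall (0 : ℂ) 1 ∩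
        (fun w => (1 + ε) * ‖deriv B w‖ - F w) ⁻¹' Set.Iic 0) with hE | hN
    · refine ⟨0, le_rfl, one_pos, fun w _ hw => ?_⟩
      by_contra hc
      have : w ∈ (∅ : Set ℂ) := by
        rw [← hE]
        refine ⟨by simpa using hw.le, ?_⟩
        simp only [Set.mem_preimage, Set.mem_Iic]
        linarith
      simp at this
    · obtain ⟨w0, hw0, hmax⟩ := hK.exists_isMaxOn hN (continuous_norm.continuousOn)
      refine ⟨‖w0‖, norm_nonneg _, ?_, fun w hlt hw => ?_⟩
      · have h1 : ‖w0‖ ≤ 1 := by simpa using hw0.1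
        refine lt_of_le_of_ne h1 fun h2 => ?_
        have h3 := d w0 h2
        have h4 := e w0 hw0.1
        have h5 : ‖B w0‖ = 1 := by
          rw [h2] at h4
          have : ‖B w0‖ ^ 2 = 1 := by linarith
          nlinarith [norm_nonneg (B w0)]
        have h6 := congrArg norm h3
        have hp := hF w0 hw0.1
        simp only [norm_mul, h2, h5, RCLike.norm_conj, Complex.norm_real, one_mul, mul_one,
          Real.norm_eq_abs, abs_of_pos hp] at h6
        have h7 := hw0.2
        simp only [Set.mem_preimage, Set.mem_Iic] at h7
        rw [h6] at h7
        nlinarith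
      · by_contra hc
        have : w ∈ (closedBall (0 : ℂ) 1 ∩
            (fun w => (1 + ε) * ‖deriv B w‖ - F w) ⁻¹' Set.Iic 0) := by
          refine ⟨by simpa using hw.le, ?_⟩
          simp only [Set.mem_preimage, Set.mem_Iic]
          linarith
        have := hmax this
        simp only [Set.mem_ofPred_eq] at this
        linarith
  obtain ⟨r, h0, h1, hr⟩ := key
  refine ⟨r, h0, h1, fun w hw hw1 => ?_⟩
  rw [e w (by simpa using hw1.le), ← mul_assoc]
  exact mul_le_mul_of_nonneg_right (hr w hw hw1) (one_sub_pos hw1).le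

lemma local_quot {F G : ℂ → ℂ} {p : ℂ} (hF : AnalyticAt ℂ F p) (hG : AnalyticAt ℂ G p)
    (hG0 : ¬ ∀ᶠ w in 𝓝 p, G w = 0) (hle : vOrder G p ≤ vOrder F p) :
    ∃ q, AnalyticAt ℂ q p ∧ ∀ᶠ w in 𝓝 p, F w = q w * G w := by
  have htop : analyticOrderAt G p ≠ ⊤ := fun h => hG0 (analyticOrderAt_eq_top.1 h)
  obtain ⟨m, hm⟩ := ENat.ne_top_iff_exists.1 htop
  obtain ⟨g, hga, hg0, hg⟩ := hG.analyticOrderAt_eq_natCast.1 hm.symm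
  have hv : (m : ℕ∞) ≤ vOrder G p := by
    have h1 := (natCast_le_analyticOrderAt_iff_iteratedDeriv_eq_zero hG).1 hm.le
    refine le_sInf ?_
    rintro _ ⟨i, hi, rfl⟩
    simp only [Nat.cast_le]
    by_contra hc
    exact hi (h1 i (by omega))
  have hmF : (m : ℕ∞) ≤ analyticOrderAt F p := by
    rw [natCast_le_analyticOrderAt_iff_iteratedDeriv_eq_zero hF]
    intro i hi
    by_contra hc
    have h2 : vOrder F p ≤ i := sInf_le ⟨i, hc, rfl⟩
    have h3 := (hv.trans hle).trans h2
    simp only [Nat.cast_le] at h3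
    omega
  obtain ⟨k, hka, hk⟩ := (natCast_le_analyticOrderAt hF).1 hmF
  refine ⟨fun w => k w / g w, hka.div hga hg0, ?_⟩
  filter_upwards [hk, hg, hga.continuousAt.eventually_ne hg0] with w h1 h2 h3
  rw [h1, h2]
  simp only [smul_eq_mul]
  field_simp

lemma exists_quot {F G : ℂ → ℂ} {U : Set ℂ} (hF : ∀ w ∈ U, AnalyticAt ℂ F w)
    (hG : ∀ w ∈ U, AnalyticAt ℂ G w)
    (hG0 : ∀ p ∈ U, ¬ ∀ᶠ w in 𝓝 p, G w = 0) (hle : ∀ p ∈ U, vOrder G p ≤ vOrder F p) :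
    ∃ h : ℂ → ℂ, (∀ p ∈ U, AnalyticAt ℂ h p) ∧ ∀ w ∈ U, F w = h w * G w := by
  have main : ∀ p ∈ U, ∃ q, AnalyticAt ℂ q p ∧ (∀ᶠ w in 𝓝 p, F w = q w * G w) ∧
      (fun w => limUnder (𝓝[≠] w) (fun x => F x / G x)) =ᶠ[𝓝 p] q := by
    intro p hp
    obtain ⟨q, hq, hqe⟩ := local_quot (hF p hp) (hG p hp) (hG0 p hp) (hle p hp)
    refine ⟨q, hq, hqe, ?_⟩
    have hne : ∀ᶠ w in 𝓝[≠] p, G w ≠ 0 :=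
      ((hG p hp).eventually_eq_zero_or_eventually_ne_zero).resolve_left (hG0 p hp)
    have hne' : ∀ᶠ w in 𝓝 p, ∀ᶠ x in 𝓝[≠] w, G x ≠ 0 := by
      have h1 := eventually_nhdsWithin_iff.1 hne
      filter_upwards [h1.eventually_nhds, (hG p hp).eventually_analyticAt] with w h2 h3
      by_cases hwp : w = p
      · rw [hwp]
        exact hne
      · have : G w ≠ 0 := h2.self_of_nhds hwp
        exact (h3.continuousAt.eventually_ne this).filter_mono nhdsWithin_le_nhds
    filter_upwards [hne', hq.eventually_analyticAt, hqe.eventually_nhds] with w h1 h2 h3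
    refine Tendsto.limUnder_eq ?_
    refine (h2.continuousAt.tendsto.mono_left (nhdsWithin_le_nhds (s := {w}ᶜ))).congr' ?_
    filter_upwards [h1, h3.filter_mono nhdsWithin_le_nhds] with x h4 h5
    rw [h5]
    field_simp
  refine ⟨fun w => limUnder (𝓝[≠] w) (fun x => F x / G x), fun p hp => ?_, fun p hp => ?_⟩
  · obtain ⟨q, hq, -, h⟩ := main p hp
    exact hq.congr h.symm
  · obtain ⟨q, hq, h1, h⟩ := main p hp
    rw [h1.self_of_nhds, h.self_of_nhds]

/-- Interior maximum principle, normalised. -/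
lemma no_local_max0 {f B h : ℂ → ℂ} {p : ℂ} (hf : AnalyticAt ℂ f p) (hB : AnalyticAt ℂ B p)
    (hh : AnalyticAt ℂ h p) (hder : ∀ᶠ w in 𝓝 p, deriv f w = h w * deriv B w)
    (hf1 : ∀ᶠ w in 𝓝 p, ‖f w‖ < 1)
    (hf0 : f p = 0) (hB0 : B p = 0) (hp : 1 < ‖h p‖) (hBn : ¬ ∀ᶠ w in 𝓝 p, B w = 0)
    (hmax : ∀ᶠ w in 𝓝 p, ‖h w‖ * (1 - ‖B w‖ ^ 2) ≤ ‖h p‖ * (1 - ‖f w‖ ^ 2)) : False := by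
  have htop : analyticOrderAt B p ≠ ⊤ := fun h => hBn (analyticOrderAt_eq_top.1 h)
  obtain ⟨m, hm⟩ := ENat.ne_top_iff_exists.1 htop
  obtain ⟨g, hga, hg0, hg⟩ := hB.analyticOrderAt_eq_natCast.1 hm.symm
  -- e = f - h(p) B vanishes to higher order
  set e : ℂ → ℂ := fun w => f w - h p * B w with he
  have hea : AnalyticAt ℂ e p := hf.sub (analyticAt_const.mul hB)
  have hm0 : m ≠ 0 := by
    rintro rfl
    exact (hB.analyticOrderAt_eq_zero.1 hm.symm) hB0
  obtain ⟨k, rfl⟩ := Nat.exists_eq_succ_of_ne_zero hm0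
  have hdB : analyticOrderAt (deriv B) p = k :=
    (analyticOrderAt_deriv_eq_iff hB hB0).1 (by rw [← hm]; push_cast; rfl)
  have hde : deriv e =ᶠ[𝓝 p] (fun w => h w - h p) * deriv B := by
    filter_upwards [hder, hf.eventually_analyticAt, hB.eventually_analyticAt] with w h1 h2 h3
    have := (h2.differentiableAt.hasDerivAt.sub
      (h3.differentiableAt.hasDerivAt.const_mul (h p))).deriv
    have h4 : deriv e w = deriv f w - h p * deriv B w := this
    rw [h4, h1]
    simp only [Pi.mul_apply]
    ring
  have hha : AnalyticAt ℂ (fun w => h w - h p) p := hh.sub analyticAt_const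
  have ho1 : 1 ≤ analyticOrderAt (fun w => h w - h p) p := by
    rw [Order.one_le_iff_ne_zero, hha.analyticOrderAt_ne_zero]
    simp
  have hoe : ((k + 1 : ℕ) : ℕ∞) ≤ analyticOrderAt (deriv e) p := by
    rw [analyticOrderAt_congr hde, analyticOrderAt_mul hha hB.deriv, hdB]
    push_cast
    rw [add_comm]
    gcongr
  have hoe2 := (analyticOrderAt_deriv_ge_iff hea (by simp [he, hf0, hB0])).1 hoe
  have hoe3 : ((k + 1 + 1 : ℕ) : ℕ∞) ≤ analyticOrderAt e p := by
    push_cast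
    push_cast at hoe2
    exact hoe2
  obtain ⟨E, hEa, hE⟩ := (natCast_le_analyticOrderAt hea).1 hoe3
  -- |f| > |B| on a punctured neighbourhood
  have hbig : ∀ᶠ w in 𝓝[≠] p, ‖B w‖ < ‖f w‖ := by
    have hlim : Tendsto (fun w => h p * g w + (w - p) * E w) (𝓝 p) (𝓝 (h p * g p)) := by
      have : ContinuousAt (fun w => h p * g w + (w - p) * E w) p := by
        have := hga.continuousAt
        have := hEa.continuousAt
        fun_prop
      simpa using this.tendsto
    have hlt : ‖g p‖ < ‖h p * g p‖ := by
      rw [norm_mul]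
      have : 0 < ‖g p‖ := by simpa using hg0
      nlinarith
    have hev := hga.continuousAt.norm.tendsto.eventually_lt hlim.norm hlt
    filter_upwards [hev.filter_mono nhdsWithin_le_nhds, hg.filter_mono nhdsWithin_le_nhds,
      hE.filter_mono nhdsWithin_le_nhds, self_mem_nhdsWithin] with w h1 h2 h3 h4
    have hfw : f w = (w - p) ^ (k + 1) * (h p * g w + (w - p) * E w) := by
      have : f w = e w + h p * B w := by simp [he]
      rw [this, h3, h2]
      simp only [smul_eq_mul, Nat.succ_eq_add_one]
      ring
    rw [hfw, h2, smul_eq_mul, norm_mul, norm_mul]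
    have : 0 < ‖(w - p) ^ (k + 1)‖ := by
      rw [norm_pos_iff]
      exact pow_ne_zero _ (sub_ne_zero.2 h4)
    exact mul_lt_mul_of_pos_left h1 this
  have hloc : IsLocalMax (norm ∘ h) p := by
    have h1 : ∀ᶠ w in 𝓝 p, ‖B w‖ ≤ ‖f w‖ := by
      have := eventually_nhdsWithin_iff.1 hbig
      filter_upwards [this] with w hw
      by_cases hwp : w = p
      · rw [hwp, hf0, hB0]
      · exact (hw hwp).le
    filter_upwards [h1, hmax, hf1] with w h2 h3 h4
    have h5 := one_sub_pos h4
    have h6 : 1 - ‖f w‖ ^ 2 ≤ 1 - ‖B w‖ ^ 2 := by gcongr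
    have : ‖h w‖ * (1 - ‖f w‖ ^ 2) ≤ ‖h p‖ * (1 - ‖f w‖ ^ 2) :=
      (mul_le_mul_of_nonneg_left h6 (norm_nonneg _)).trans h3
    exact le_of_mul_le_mul_right this h5
  have hconst := Complex.eventually_eq_of_isLocalMax_norm
    (hh.eventually_analyticAt.mono fun w hw => hw.differentiableAt) hloc
  obtain ⟨w, h1, h2, h3⟩ := (hbig.and ((hconst.and hmax).filter_mono nhdsWithin_le_nhds)).exists
  rw [h2] at h3
  have := le_of_mul_le_mul_left h3 (by linarith)
  nlinarith [norm_nonneg (B w)]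

/-- derivative of the automorphism `mob a` -/
noncomputable def dm (a u : ℂ) : ℂ := (1 - (‖a‖ : ℂ) ^ 2) / (1 - conj a * u) ^ 2

lemma one_sub_mob' {a u : ℂ} (ha : ‖a‖ < 1) (hu : ‖u‖ ≤ 1) :
    1 - ‖mob a u‖ ^ 2 = ‖dm a u‖ * (1 - ‖u‖ ^ 2) := by
  rw [one_sub_mob ha hu, dm, norm_div, norm_fac ha, norm_pow]

lemma dm_ne {a u : ℂ} (ha : ‖a‖ < 1) (hu : ‖u‖ ≤ 1) : dm a u ≠ 0 := by
  refine div_ne_zero ?_ (pow_ne_zero _ (den_ne ha hu))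
  rw [← norm_pos_iff, norm_fac ha]
  exact one_sub_pos ha

lemma mob_comp_analytic {a p : ℂ} {f : ℂ → ℂ} (ha : ‖a‖ < 1) (hf : AnalyticAt ℂ f p)
    (hp : ‖f p‖ ≤ 1) : AnalyticAt ℂ (fun w => mob a (f w)) p := by
  have := den_ne ha hp
  unfold mob
  fun_prop (disch := assumption)

lemma dm_comp_analytic {a p : ℂ} {f : ℂ → ℂ} (ha : ‖a‖ < 1) (hf : AnalyticAt ℂ f p)
    (hp : ‖f p‖ ≤ 1) : AnalyticAt ℂ (fun w => dm a (f w)) p := by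
  have := pow_ne_zero 2 (den_ne ha hp)
  unfold dm
  fun_prop (disch := assumption)

lemma mob_comp_deriv {a p : ℂ} {f : ℂ → ℂ} (ha : ‖a‖ < 1) (hf : AnalyticAt ℂ f p)
    (hp : ‖f p‖ ≤ 1) : deriv (fun w => mob a (f w)) p = dm a (f p) * deriv f p :=
  ((mob_hasDerivAt ha hp).comp p hf.differentiableAt.hasDerivAt).deriv

lemma mob_self (a : ℂ) : mob a a = 0 := by simp [mob]

lemma no_local_max {f B h : ℂ → ℂ} {p : ℂ} (hf : AnalyticAt ℂ f p) (hB : AnalyticAt ℂ B p)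
    (hh : AnalyticAt ℂ h p) (hder : ∀ᶠ w in 𝓝 p, deriv f w = h w * deriv B w)
    (hf1 : ∀ᶠ w in 𝓝 p, ‖f w‖ < 1) (hB1 : ∀ᶠ w in 𝓝 p, ‖B w‖ < 1)
    (hp : 1 < ‖h p‖ * (1 - ‖B p‖ ^ 2) / (1 - ‖f p‖ ^ 2)) (hBn : ¬ ∀ᶠ w in 𝓝 p, deriv B w = 0)
    (hmax : ∀ᶠ w in 𝓝 p, ‖h w‖ * (1 - ‖B w‖ ^ 2) / (1 - ‖f w‖ ^ 2) ≤
      ‖h p‖ * (1 - ‖B p‖ ^ 2) / (1 - ‖f p‖ ^ 2)) : False := by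
  have ha := hf1.self_of_nhds
  have hb := hB1.self_of_nhds
  set V := ‖h p‖ * (1 - ‖B p‖ ^ 2) / (1 - ‖f p‖ ^ 2) with hV
  set h' : ℂ → ℂ := fun w => h w * dm (f p) (f w) / dm (B p) (B w) with hh'
  have hnorm : ∀ w, ‖f w‖ < 1 → ‖B w‖ < 1 → ‖h' w‖ * (1 - ‖mob (B p) (B w)‖ ^ 2) =
      ‖dm (f p) (f w)‖ * (‖h w‖ * (1 - ‖B w‖ ^ 2)) := by
    intro w h1 h2
    rw [one_sub_mob' hb h2.le, hh']
    simp only [norm_div, norm_mul]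
    have : ‖dm (B p) (B w)‖ ≠ 0 := by simpa using dm_ne hb h2.le
    field_simp
  have hVp : ‖h' p‖ = V := by
    have h1 := hnorm p ha hb
    have h2 := one_sub_mob' (a := f p) (u := f p) ha ha.le
    rw [mob_self] at h1 h2
    have h3 := one_sub_pos ha
    simp only [norm_zero, ne_eq, OfNat.ofNat_ne_zero, not_false_eq_true, zero_pow, sub_zero,
      mul_one] at h1 h2
    rw [h1, hV]
    field_simp
    linear_combination -(‖h p‖ * (1 - ‖B p‖ ^ 2)) * h2
  refine no_local_max0 (f := fun w => mob (f p) (f w)) (B := fun w => mob (B p) (B w)) (h := h')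
    (mob_comp_analytic ha hf ha.le) (mob_comp_analytic hb hB hb.le)
    ((hh.mul (dm_comp_analytic ha hf ha.le)).div (dm_comp_analytic hb hB hb.le) (dm_ne hb hb.le))
    ?_ ?_ (mob_self _) (mob_self _) (hVp ▸ hp) ?_ ?_
  · filter_upwards [hder, hf1, hB1, hf.eventually_analyticAt, hB.eventually_analyticAt]
      with w h1 h2 h3 h4 h5
    rw [mob_comp_deriv ha h4 h2.le, mob_comp_deriv hb h5 h3.le, h1, hh']
    have := dm_ne hb h3.le
    field_simp
  · filter_upwards [hf1] with w hw using norm_mob_lt ha hw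
  · intro hc
    apply hBn
    filter_upwards [hc.eventually_nhds, hB1, hB.eventually_analyticAt] with w h1 h2 h3
    have h4 := mob_comp_deriv hb h3 h2.le
    have h5 : deriv (fun w => mob (B p) (B w)) w = 0 := by
      rw [EventuallyEq.deriv_eq (f := fun _ => (0 : ℂ)) h1]
      simp
    rw [h5] at h4
    exact (mul_eq_zero.1 h4.symm).resolve_left (dm_ne hb h2.le)
  · filter_upwards [hmax, hf1, hB1] with w h1 h2 h3
    rw [hnorm w h2 h3, one_sub_mob' ha h2.le, hVp]
    have h4 := one_sub_pos h2
    rw [div_le_iff₀ h4] at h1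
    have := mul_le_mul_of_nonneg_left h1 (norm_nonneg (dm (f p) (f w)))
    linarith

lemma rig0 {f B : ℂ → ℂ} {z : ℂ} (hf : AnalyticAt ℂ f z) (hB : AnalyticAt ℂ B z)
    (hf0 : f z = 0) (hB0 : B z = 0) (hB' : deriv B z ≠ 0) (heq : ‖deriv f z‖ = ‖deriv B z‖)
    (hle : ∀ᶠ w in 𝓝 z, ‖deriv f w‖ * (1 - ‖B w‖ ^ 2) ≤ ‖deriv B w‖ * (1 - ‖f w‖ ^ 2)) :
    ∃ c : ℂ, ‖c‖ = 1 ∧ ∀ᶠ w in 𝓝 z, f w = c * B w := by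
  have hsd := hB.hasStrictDerivAt.hasStrictFDerivAt_equiv hB'
  set R := hsd.toOpenPartialHomeomorph B with hR
  have hRc : ∀ w, R w = B w := fun w => rfl
  have hzs : z ∈ R.source := hsd.mem_toOpenPartialHomeomorph_source
  have h0t : (0 : ℂ) ∈ R.target := by
    have := R.map_source hzs
    rwa [hRc, hB0] at this
  have hk0 : R.symm 0 = z := by
    have := R.left_inv hzs
    rwa [hRc, hB0] at this
  have hkc : Tendsto R.symm (𝓝 0) (𝓝 z) := by
    have := (R.continuousAt_symm h0t).tendsto
    rwa [hk0] at this
  set g : ℂ → ℂ := fun u => f (R.symm u) with hg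
  have hev : ∀ᶠ u in 𝓝 (0 : ℂ), ∃ g', HasDerivAt g g' u ∧
      ‖g'‖ * (1 - ‖u‖ ^ 2) ≤ 1 - ‖g u‖ ^ 2 := by
    filter_upwards [R.open_target.mem_nhds h0t, hkc.eventually hf.eventually_analyticAt,
      hkc.eventually hB.eventually_analyticAt, hkc.eventually hle,
      hkc.eventually (hB.deriv.continuousAt.eventually_ne hB')] with u h1 h2 h3 h4 h5
    have hd := R.hasDerivAt_symm h1 h5 h3.differentiableAt.hasDerivAt
    refine ⟨_, h2.differentiableAt.hasDerivAt.comp u hd, ?_⟩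
    have hBu : B (R.symm u) = u := R.right_inv h1
    rw [hBu] at h4
    have hpos : 0 < ‖deriv B (R.symm u)‖ := by simpa using h5
    rw [norm_mul, norm_inv]
    calc ‖deriv f (R.symm u)‖ * ‖deriv B (R.symm u)‖⁻¹ * (1 - ‖u‖ ^ 2)
        = ‖deriv B (R.symm u)‖⁻¹ * (‖deriv f (R.symm u)‖ * (1 - ‖u‖ ^ 2)) := by ring
      _ ≤ ‖deriv B (R.symm u)‖⁻¹ * (‖deriv B (R.symm u)‖ * (1 - ‖g u‖ ^ 2)) := by gcongr
      _ = 1 - ‖g u‖ ^ 2 := by field_simp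
  have hg0 : g 0 = 0 := by simp [hg, hk0, hf0]
  have hdg0 : ‖deriv g 0‖ = 1 := by
    have hd := R.hasDerivAt_symm h0t (f' := deriv B z) hB'
      (by rw [hk0]; exact hB.differentiableAt.hasDerivAt)
    have h2 : HasDerivAt f (deriv f z) (R.symm 0) := by
      rw [hk0]; exact hf.differentiableAt.hasDerivAt
    have h3 : deriv g 0 = _ := (h2.comp 0 hd).deriv
    rw [h3, norm_mul, norm_inv, heq]
    exact mul_inv_cancel₀ (by simpa using hB')
  obtain ⟨r0, hr0, hball⟩ := Metric.eventually_nhds_iff_ball.1 hev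
  set r := min r0 1 with hr
  have hrpos : 0 < r := lt_min hr0 one_pos
  have hball' : ∀ u ∈ ball (0 : ℂ) r, ∃ g', HasDerivAt g g' u ∧
      ‖g'‖ * (1 - ‖u‖ ^ 2) ≤ 1 - ‖g u‖ ^ 2 := fun u hu =>
    hball u (ball_subset_ball (min_le_left _ _) hu)
  choose! g' hg' hbd using hball'
  have hcontr : ∀ u ∈ ball (0 : ℂ) r, ‖g u‖ ≤ ‖u‖ := by
    intro u hu
    by_cases hu0 : u = 0
    · simp [hu0, hg0]
    have hun : 0 < ‖u‖ := by simpa using hu0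
    have hur : ‖u‖ < r := by simpa using hu
    have hu1 : ‖u‖ < 1 := hur.trans_le (min_le_right _ _)
    have hmem : ∀ t ∈ Set.Icc (0 : ℝ) 1, (t : ℂ) * u ∈ ball (0 : ℂ) r := by
      intro t ht
      have : ‖(t : ℂ) * u‖ = t * ‖u‖ := by
        rw [norm_mul, Complex.norm_real, Real.norm_of_nonneg ht.1]
      rw [mem_ball_zero_iff, this]
      nlinarith [ht.2]
    have hderiv : ∀ t ∈ Set.Icc (0 : ℝ) 1,
        HasDerivAt (fun t : ℝ => g ((t : ℂ) * u)) (g' ((t : ℂ) * u) * u) t := by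
      intro t ht
      have h1 : HasDerivAt (fun s : ℂ => s * u) u (t : ℂ) := by
        simpa using (hasDerivAt_id (t : ℂ)).mul_const u
      exact ((hg' _ (hmem t ht)).comp (t : ℂ) h1).comp_ofReal
    have hε : ∀ ε > 0, ‖g u‖ ≤ (1 + ε) * ‖u‖ := by
      intro ε hε
      have := image_norm_le_of_norm_deriv_right_lt_deriv_boundary' (a := 0) (b := 1)
        (f := fun t : ℝ => g ((t : ℂ) * u)) (f' := fun t => g' ((t : ℂ) * u) * u)
        (B := fun t => t * ((1 + ε) * ‖u‖)) (B' := fun _ => (1 + ε) * ‖u‖)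
        (fun t ht => (hderiv t ht).continuousAt.continuousWithinAt)
        (fun t ht => (hderiv t ⟨ht.1, ht.2.le⟩).hasDerivWithinAt)
        (by simp [hg0]) (by fun_prop)
        (fun t ht => by
          simpa using ((hasDerivAt_id t).mul_const ((1 + ε) * ‖u‖)).hasDerivWithinAt)
        (fun t ht heq => by
          have htm : t ∈ Set.Icc (0 : ℝ) 1 := ⟨ht.1, ht.2.le⟩
          have h1 := hbd _ (hmem t htm)
          have h2 : ‖(t : ℂ) * u‖ = t * ‖u‖ := by
            rw [norm_mul, Complex.norm_real, Real.norm_of_nonneg ht.1]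
          rw [heq, h2] at h1
          have htu : 0 ≤ t * ‖u‖ := mul_nonneg ht.1 hun.le
          have h3 : t * ‖u‖ < 1 := by nlinarith [ht.2]
          have h4 : (t * ‖u‖) ^ 2 ≤ (t * ((1 + ε) * ‖u‖)) ^ 2 := by
            apply pow_le_pow_left₀ htu
            nlinarith
          have h5 : 0 < 1 - (t * ‖u‖) ^ 2 := by nlinarith
          have h6 : ‖g' ((t : ℂ) * u)‖ ≤ 1 := by
            by_contra hc
            push Not at hc
            nlinarith
          rw [norm_mul]
          nlinarith) (x := 1) (by simp)
      simpa using this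
    refine le_of_forall_pos_le_add fun δ hδ => ?_
    have := hε (δ / ‖u‖) (by positivity)
    have h2 : (1 + δ / ‖u‖) * ‖u‖ = ‖u‖ + δ := by field_simp
    linarith
  have haff := Complex.affine_of_mapsTo_ball_of_norm_dslope_eq_div (f := g) (c := 0) (z₀ := 0)
    (R₁ := r) (R₂ := r) (fun u hu => (hg' u hu).differentiableAt.differentiableWithinAt)
    (fun u hu => by
      rw [hg0, mem_closedBall_zero_iff]
      exact (hcontr u hu).trans (mem_ball_zero_iff.1 hu).le)
    (by simpa using hrpos) (by rw [dslope_same, hdg0, div_self hrpos.ne'])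
  refine ⟨deriv g 0, hdg0, ?_⟩
  have hBt : Tendsto B (𝓝 z) (𝓝 0) := by
    have := hB.continuousAt.tendsto
    rwa [hB0] at this
  filter_upwards [hBt.eventually (ball_mem_nhds 0 hrpos), R.open_source.mem_nhds hzs] with w h1 h2
  have h3 := haff h1
  have h4 : R.symm (B w) = w := R.left_inv h2
  simp only [hg, h4, hk0, hf0, dslope_same, zero_add, sub_zero, smul_eq_mul] at h3
  rw [h3, mul_comm]

/-- The Nehari–Schwarz inequality. -/
lemma nehari {f B h : ℂ → ℂ} {F : ℂ → ℝ} (hf : ∀ w ∈ ball (0 : ℂ) 1, AnalyticAt ℂ f w)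
    (hf1 : ∀ w ∈ ball (0 : ℂ) 1, ‖f w‖ < 1) (hG : Good B F)
    (hF : ∀ w ∈ closedBall (0 : ℂ) 1, 0 < F w)
    (hB1 : ∀ w ∈ ball (0 : ℂ) 1, ‖B w‖ < 1)
    (hh : ∀ w ∈ ball (0 : ℂ) 1, AnalyticAt ℂ h w)
    (hder : ∀ w ∈ ball (0 : ℂ) 1, deriv f w = h w * deriv B w)
    (hBn : ∀ p ∈ ball (0 : ℂ) 1, ¬ ∀ᶠ w in 𝓝 p, deriv B w = 0) :
    ∀ w ∈ ball (0 : ℂ) 1, ‖h w‖ * (1 - ‖B w‖ ^ 2) / (1 - ‖f w‖ ^ 2) ≤ 1 := by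
  by_contra! hcon
  obtain ⟨p0, hp0, hlt⟩ := hcon
  set V : ℂ → ℝ := fun w => ‖h w‖ * (1 - ‖B w‖ ^ 2) / (1 - ‖f w‖ ^ 2) with hV
  have hlt' : 1 < V p0 := hlt
  obtain ⟨r, hr0, hr1, hr⟩ := boundary_est hG hF (ε := (V p0 - 1) / 2) (by linarith)
  have hout : ∀ w ∈ ball (0 : ℂ) 1, r < ‖w‖ → V w < V p0 := by
    intro w hw hrw
    have h1 := hr w hrw (by simpa using hw)
    have h2 := schwarz_pick (fun z hz => (hf z hz).differentiableAt) hf1 hw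
    rw [hder w hw, norm_mul] at h2
    have h3 := one_sub_pos (hf1 w hw)
    have h4 : V w ≤ 1 + (V p0 - 1) / 2 := by
      rw [hV]
      simp only
      rw [div_le_iff₀ h3]
      calc ‖h w‖ * (1 - ‖B w‖ ^ 2)
          ≤ ‖h w‖ * ((1 + (V p0 - 1) / 2) * (‖deriv B w‖ * (1 - ‖w‖ ^ 2))) := by gcongr
        _ = (1 + (V p0 - 1) / 2) * (‖h w‖ * ‖deriv B w‖ * (1 - ‖w‖ ^ 2)) := by ring
        _ ≤ (1 + (V p0 - 1) / 2) * (1 - ‖f w‖ ^ 2) := by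
            apply mul_le_mul_of_nonneg_left h2
            linarith
    linarith
  have hsub : closedBall (0 : ℂ) r ⊆ ball 0 1 := closedBall_subset_ball hr1
  have hp0r : p0 ∈ closedBall (0 : ℂ) r := by
    by_contra hc
    have : r < ‖p0‖ := by simpa using hc
    exact lt_irrefl _ (hout p0 hp0 this)
  have hVc : ContinuousOn V (closedBall 0 r) := by
    intro w hw
    have hw' := hsub hw
    have c1 := (hf w hw').continuousAt
    have c2 := (hG.1 w (ball_subset_closedBall hw')).continuousAt
    have c3 := (hh w hw').continuousAt
    have c4 := (one_sub_pos (hf1 w hw')).ne'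
    apply ContinuousAt.continuousWithinAt
    rw [hV]
    fun_prop (disch := assumption)
  obtain ⟨p, hp, hmax⟩ := (isCompact_closedBall (0 : ℂ) r).exists_isMaxOn ⟨p0, hp0r⟩ hVc
  have hpb := hsub hp
  have hVp : V p0 ≤ V p := hmax hp0r
  have hnb := isOpen_ball.mem_nhds hpb
  refine no_local_max (hf p hpb) (hG.1 p (ball_subset_closedBall hpb)) (hh p hpb)
    ?_ ?_ ?_ (lt_of_lt_of_le hlt' hVp) (hBn p hpb) ?_
  · filter_upwards [hnb] with w hw using hder w hw
  · filter_upwards [hnb] with w hw using hf1 w hw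
  · filter_upwards [hnb] with w hw using hB1 w hw
  · filter_upwards [hnb] with w hw
    by_cases hc : w ∈ closedBall (0 : ℂ) r
    · exact hmax hc
    · have : r < ‖w‖ := by simpa using hc
      exact (hout w hw this).le.trans hVp

end NS

open NS in
open scoped Topology ComplexConjugate in
theorem nehari_schwarz_equality_interior (f : ℂ → ℂ)
    (hf_diff : ∀ z ∈ Metric.ball (0 : ℂ) 1, DifferentiableAt ℂ f z)
    (hf_le : ∀ z ∈ Metric.ball (0 : ℂ) 1, ‖f z‖ ≤ 1)
    (hf_nc : ∃ z ∈ Metric.ball (0 : ℂ) 1, ∃ w ∈ Metric.ball (0 : ℂ) 1, f z ≠ f w)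
    (n : ℕ) (η : ℂ) (a : Fin n → ℂ) (hη : ‖η‖ = 1) (ha : ∀ j, ‖a j‖ < 1)
    (B : ℂ → ℂ)
    (hB : ∀ z, B z = η * ∏ j, (a j - z) / (1 - (starRingEnd ℂ) (a j) * z))
    (hcrit : ∀ z ∈ Metric.ball (0 : ℂ) 1, vOrder (deriv B) z ≤ vOrder (deriv f) z)
    (z : ℂ) (hz : z ∈ Metric.ball (0 : ℂ) 1) (hz' : deriv B z ≠ 0)
    (heq : ‖deriv f z‖ * (1 - ‖B z‖ ^ 2) = ‖deriv B z‖ * (1 - ‖f z‖ ^ 2)) :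
    ∃ (τ : ℂ) (z₀ : ℂ), ‖τ‖ = 1 ∧ ‖z₀‖ < 1 ∧
      ∀ w ∈ Metric.ball (0 : ℂ) 1,
        f w = τ * (z₀ - B w) / (1 - (starRingEnd ℂ) z₀ * B w) := by
  have hn : n ≠ 0 := by
    rintro rfl
    apply hz'
    have : B = fun _ => η := by
      funext w
      simp [hB]
    rw [this]
    simp
  obtain ⟨F, hG, hF⟩ := good_blaschke hn hη a ha
  rw [← show B = _ from funext hB] at hG
  have hconn : IsPreconnected (ball (0 : ℂ) 1) := (convex_ball _ _).isPreconnected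
  have hB1 : ∀ w ∈ ball (0 : ℂ) 1, ‖B w‖ < 1 := by
    intro w hw
    have hw' := ball_subset_closedBall hw
    apply lt_one_of_pos
    rw [hG.2.2.2.1 w hw']
    exact mul_pos (hF w hw') (one_sub_pos (by simpa using hw))
  have hBa : ∀ w ∈ ball (0 : ℂ) 1, AnalyticAt ℂ B w := fun w hw =>
    hG.1 w (ball_subset_closedBall hw)
  have hfd : DifferentiableOn ℂ f (ball 0 1) := fun w hw =>
    (hf_diff w hw).differentiableWithinAt
  have hfa : ∀ w ∈ ball (0 : ℂ) 1, AnalyticAt ℂ f w := fun w hw =>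
    hfd.analyticAt (isOpen_ball.mem_nhds hw)
  have hf1 : ∀ w ∈ ball (0 : ℂ) 1, ‖f w‖ < 1 := by
    intro w hw
    refine lt_of_le_of_ne (hf_le w hw) fun h1 => ?_
    have := Complex.eqOn_of_isPreconnected_of_isMaxOn_norm hconn isOpen_ball hfd hw
      (fun x hx => by simpa [h1] using hf_le x hx)
    obtain ⟨x, hx, y, hy, hxy⟩ := hf_nc
    exact hxy ((this hx).trans (this hy).symm)
  have hBn : ∀ p ∈ ball (0 : ℂ) 1, ¬ ∀ᶠ w in 𝓝 p, deriv B w = 0 := by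
    intro p hp hc
    apply hz'
    have h1 : AnalyticOnNhd ℂ (deriv B) (ball 0 1) := fun w hw => (hBa w hw).deriv
    exact h1.eqOn_zero_of_preconnected_of_eventuallyEq_zero hconn hp hc hz
  obtain ⟨h, hh, hder⟩ := exists_quot (fun w hw => (hfa w hw).deriv)
    (fun w hw => (hBa w hw).deriv) hBn hcrit
  have hneh := nehari hfa hf1 hG hF hB1 hh hder hBn
  have hle : ∀ w ∈ ball (0 : ℂ) 1,
      ‖deriv f w‖ * (1 - ‖B w‖ ^ 2) ≤ ‖deriv B w‖ * (1 - ‖f w‖ ^ 2) := by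
    intro w hw
    have h1 := hneh w hw
    rw [div_le_iff₀ (one_sub_pos (hf1 w hw)), one_mul] at h1
    rw [hder w hw, norm_mul]
    have := mul_le_mul_of_nonneg_left h1 (norm_nonneg (deriv B w))
    linarith
  -- normalise at `z`
  have hα := hf1 z hz
  have hβ := hB1 z hz
  have hnz := isOpen_ball.mem_nhds hz
  obtain ⟨c, hc, hcE⟩ := rig0 (f := fun w => mob (f z) (f w)) (B := fun w => mob (B z) (B w))
    (z := z) (mob_comp_analytic hα (hfa z hz) hα.le) (mob_comp_analytic hβ (hBa z hz) hβ.le)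
    (mob_self _) (mob_self _)
    (by
      rw [mob_comp_deriv hβ (hBa z hz) hβ.le]
      exact mul_ne_zero (dm_ne hβ hβ.le) hz')
    (by
      rw [mob_comp_deriv hβ (hBa z hz) hβ.le, mob_comp_deriv hα (hfa z hz) hα.le,
        norm_mul, norm_mul]
      have h1 := one_sub_mob' (a := f z) (u := f z) hα hα.le
      have h2 := one_sub_mob' (a := B z) (u := B z) hβ hβ.le
      rw [mob_self] at h1 h2
      simp only [norm_zero, ne_eq, OfNat.ofNat_ne_zero, not_false_eq_true, zero_pow,
        sub_zero] at h1 h2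
      linear_combination ‖dm (f z) (f z)‖ * ‖dm (B z) (B z)‖ * heq
        + ‖dm (f z) (f z)‖ * ‖deriv f z‖ * h2 - ‖dm (B z) (B z)‖ * ‖deriv B z‖ * h1)
    (by
      filter_upwards [hnz] with w hw
      rw [mob_comp_deriv hβ (hBa w hw) (hB1 w hw).le, mob_comp_deriv hα (hfa w hw) (hf1 w hw).le,
        norm_mul, norm_mul, one_sub_mob' hα (hf1 w hw).le, one_sub_mob' hβ (hB1 w hw).le]
      have := mul_le_mul_of_nonneg_left (hle w hw)
        (mul_nonneg (norm_nonneg (dm (f z) (f w))) (norm_nonneg (dm (B z) (B w))))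
      linarith)
  have hall : ∀ w ∈ ball (0 : ℂ) 1, mob (f z) (f w) = c * mob (B z) (B w) := by
    have h1 : AnalyticOnNhd ℂ (fun w => mob (f z) (f w)) (ball 0 1) := fun w hw =>
      mob_comp_analytic hα (hfa w hw) (hf1 w hw).le
    have h2 : AnalyticOnNhd ℂ (fun w => c * mob (B z) (B w)) (ball 0 1) := fun w hw =>
      analyticAt_const.mul (mob_comp_analytic hβ (hBa w hw) (hB1 w hw).le)
    exact h1.eqOn_of_preconnected_of_eventuallyEq h2 hconn hz hcE
  -- solve for `f`
  generalize f z = α at hα hall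
  generalize B z = β at hβ hall
  have hcc : c * conj c = 1 := by rw [Complex.mul_conj', hc]; simp
  have hδ : ‖α * conj c‖ < 1 := by simpa [hc] using hα
  have hz0 : ‖mob (α * conj c) β‖ < 1 := norm_mob_lt hδ hβ
  have hden : 1 - conj α * c * β ≠ 0 := by simpa using den_ne hδ hβ.le
  have hden' : 1 - α * conj c * conj β ≠ 0 := by
    intro h
    apply hden
    simpa using congrArg conj h
  have hnn : ‖1 - α * conj c * conj β‖ = ‖1 - conj α * c * β‖ := by
    rw [← RCLike.norm_conj]
    simp
  refine ⟨-c * (1 - α * conj c * conj β) / (1 - conj α * c * β),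
    (β - α * conj c) / (1 - α * conj c * conj β), ?_, ?_, ?_⟩
  · rw [norm_div, norm_mul, norm_neg, hc, hnn, one_mul]
    exact div_self (by simpa using hden)
  · rw [mob, norm_div] at hz0
    rw [norm_div, hnn]
    simpa using hz0
  · intro w hw
    have hE := hall w hw
    have hd1 := den_ne hα (hf1 w hw).le
    have hd2 := den_ne hβ (hB1 w hw).le
    have hlast : 1 - conj ((β - α * conj c) / (1 - α * conj c * conj β)) * B w ≠ 0 := by
      refine den_ne ?_ (hB1 w hw).le
      rw [mob, norm_div] at hz0
      rw [norm_div, hnn]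
      simpa using hz0
    rw [eq_div_iff hlast]
    simp only [map_div₀, map_sub, map_mul, map_one, Complex.conj_conj] at hlast ⊢
    rw [mob, mob, ← mul_div_assoc, div_eq_div_iff hd1 hd2] at hE
    generalize f w = u at *
    generalize B w = v at *
    generalize conj α = α' at *
    generalize conj β = β' at *
    generalize conj c = c' at *
    have e1 : u * (1 - (β' - α' * c) / (1 - α' * c * β) * v) * (1 - α' * c * β) =
      u * ((1 - α' * c * β) - (β' - α' * c) * v) := by
      field_simp
    have e2 : -c * (1 - α * c' * β') / (1 - α' * c * β) *
        ((β - α * c') / (1 - α * c' * β') - v) * (1 - α' * c * β) =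
        -c * ((β - α * c') - v * (1 - α * c' * β')) := by
      generalize 1 - α' * c * β = d at hden ⊢
      generalize 1 - α * c' * β' = d' at hden' ⊢
      field_simp
    apply mul_right_cancel₀ hden
    rw [e1, e2]
    linear_combination hE - α * (1 - v * β') * hcc
end

section
/- (Heins' characterization of finite Blaschke products) Let f be a nonconstant holomorphic function from the open unit disk 𝔻 into the closed unit disk such that lim_{|z| → 1⁻} (1 − |z|²) |f'(z)| / (1 − |f(z)|²) = 1. Then f is a finite Blaschke product, i.e. f(z) = η ∏_{j=1}^n (z_j − z)/(1 − conj(z_j) z) for some n ≥ 1, |η| = 1 and z_1, ..., z_n ∈ 𝔻. -/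
open Metric Filter

lemma mobius_norm_le {b w : ℂ} (hb : ‖b‖ < 1) (hw : ‖w‖ ≤ 1) :
    1 - (starRingEnd ℂ) b * w ≠ 0 ∧ ‖(w - b) / (1 - (starRingEnd ℂ) b * w)‖ ≤ 1 := by
  have h1 : 1 - (starRingEnd ℂ) b * w ≠ 0 := by
    intro h
    have : ‖(starRingEnd ℂ) b * w‖ = 1 := by
      rw [← sub_eq_zero.mp h]; simp
    rw [norm_mul, RCLike.norm_conj] at this
    nlinarith [norm_nonneg b, norm_nonneg w]
  refine ⟨h1, ?_⟩
  rw [norm_div, div_le_one (norm_pos_iff.mpr h1)]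
  rw [← sq_le_sq₀ (norm_nonneg _) (norm_nonneg _)]
  have hb2 : ‖b‖ ^ 2 ≤ 1 := by nlinarith [norm_nonneg b]
  have hw2 : ‖w‖ ^ 2 ≤ 1 := by nlinarith [norm_nonneg w]
  rw [← Complex.normSq_eq_norm_sq, Complex.normSq_apply] at hb2 hw2 ⊢
  rw [← Complex.normSq_eq_norm_sq, Complex.normSq_apply]
  simp
  nlinarith [mul_nonneg (sub_nonneg.2 hb2) (sub_nonneg.2 hw2)]

lemma const_of_norm_one {F : ℂ → ℂ} (hF : DifferentiableOn ℂ F (ball 0 1))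
    (h1 : ∀ z ∈ ball (0 : ℂ) 1, ‖F z‖ ≤ 1) {c : ℂ} (hc : c ∈ ball (0 : ℂ) 1) (h : ‖F c‖ = 1) :
    ∀ z ∈ ball (0 : ℂ) 1, F z = F c := by
  intro z hz
  exact Complex.eqOn_of_isPreconnected_of_isMaxOn_norm (convex_ball (0 : ℂ) 1).isPreconnected
    isOpen_ball hF hc (fun x hx => by simpa [h] using h1 x hx) hz

lemma exists_factor {F : ℂ → ℂ} (hF : DifferentiableOn ℂ F (ball 0 1))
    (h1 : ∀ z ∈ ball (0 : ℂ) 1, ‖F z‖ ≤ 1) (h0 : ‖F 0‖ < 1) :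
    ∃ k : ℂ → ℂ, DifferentiableOn ℂ k (ball 0 1) ∧ (∀ z ∈ ball (0 : ℂ) 1, ‖k z‖ ≤ 1) ∧
      ∀ z ∈ ball (0 : ℂ) 1, F z - F 0 = (1 - (starRingEnd ℂ) (F 0) * F z) * (z * k z) := by
  set G : ℂ → ℂ := fun z => (F z - F 0) / (1 - (starRingEnd ℂ) (F 0) * F z) with hG
  have hne : ∀ z ∈ ball (0 : ℂ) 1, 1 - (starRingEnd ℂ) (F 0) * F z ≠ 0 :=
    fun z hz => (mobius_norm_le h0 (h1 z hz)).1
  have hGd : DifferentiableOn ℂ G (ball 0 1) :=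
    (hF.sub_const _).div ((differentiableOn_const _).sub (hF.const_mul _)) hne
  have hG0 : G 0 = 0 := by simp [hG]
  have hm : Set.MapsTo G (ball 0 1) (closedBall (G 0) 1) := by
    intro z hz
    rw [hG0, mem_closedBall_zero_iff]
    exact (mobius_norm_le h0 (h1 z hz)).2
  refine ⟨dslope G 0, ?_, ?_, ?_⟩
  · exact (Complex.differentiableOn_dslope (ball_mem_nhds _ one_pos)).2 hGd
  · intro z hz
    simpa using Complex.norm_dslope_le_div_of_mapsTo_ball hGd hm hz
  · intro z hz
    have := sub_smul_dslope G 0 z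
    simp only [sub_zero, smul_eq_mul, hG0] at this
    rw [this, hG]
    exact (mul_div_cancel₀ _ (hne z hz)).symm

lemma one_sub_conj (b : ℂ) : 1 - (starRingEnd ℂ) b * b = ((1 - ‖b‖ ^ 2 : ℝ) : ℂ) := by
  rw [mul_comm, Complex.mul_conj, Complex.normSq_eq_norm_sq]; push_cast; rfl

lemma pick_zero {F : ℂ → ℂ} (hF : DifferentiableOn ℂ F (ball 0 1))
    (h1 : ∀ z ∈ ball (0 : ℂ) 1, ‖F z‖ ≤ 1) : ‖deriv F 0‖ ≤ 1 - ‖F 0‖ ^ 2 := by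
  have hm : (0 : ℂ) ∈ ball (0 : ℂ) 1 := mem_ball_self one_pos
  rcases (h1 0 hm).lt_or_eq with h0 | h0
  · obtain ⟨k, hk, hk1, hkF⟩ := exists_factor hF h1 h0
    have hFd := (hF.differentiableAt (ball_mem_nhds _ one_pos)).hasDerivAt
    have hkd := (hk.differentiableAt (ball_mem_nhds _ one_pos)).hasDerivAt
    have e1 := hFd.sub_const (F 0)
    have e2 := ((hFd.const_mul ((starRingEnd ℂ) (F 0))).const_sub 1).mul
      ((hasDerivAt_id (0 : ℂ)).mul hkd)
    have e3 : (fun z => F z - F 0) =ᶠ[nhds 0]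
        (fun z => (1 - (starRingEnd ℂ) (F 0) * F z) * (z * k z)) := by
      filter_upwards [ball_mem_nhds (0 : ℂ) one_pos] with z hz using hkF z hz
    have e4 := e1.unique (e2.congr_of_eventuallyEq e3)
    simp at e4
    rw [one_sub_conj] at e4
    rw [e4, norm_mul, Complex.norm_real, Real.norm_of_nonneg (by nlinarith [norm_nonneg (F 0)])]
    exact mul_le_of_le_one_right (by nlinarith [norm_nonneg (F 0)]) (hk1 0 hm)
  · have hc := const_of_norm_one hF h1 hm h0
    have : F =ᶠ[nhds 0] fun _ => F 0 := by
      filter_upwards [ball_mem_nhds (0 : ℂ) one_pos] with z hz using hc z hz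
    rw [this.deriv_eq]; simp [h0]

lemma pick_two {F : ℂ → ℂ} (hF : DifferentiableOn ℂ F (ball 0 1))
    (h1 : ∀ z ∈ ball (0 : ℂ) 1, ‖F z‖ ≤ 1) (h0 : ‖F 0‖ < 1) :
    ‖deriv (deriv F) 0 * ((1 - ‖F 0‖ ^ 2 : ℝ) : ℂ) + 2 * (starRingEnd ℂ) (F 0) * (deriv F 0) ^ 2‖
      ≤ 2 * ((1 - ‖F 0‖ ^ 2) ^ 2 - ‖deriv F 0‖ ^ 2) := by
  have hm : (0 : ℂ) ∈ ball (0 : ℂ) 1 := mem_ball_self one_pos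
  obtain ⟨k, hk, hk1, hkF⟩ := exists_factor hF h1 h0
  have key : ∀ z ∈ ball (0 : ℂ) 1, deriv F z =
      -((starRingEnd ℂ) (F 0) * deriv F z) * (z * k z) +
      (1 - (starRingEnd ℂ) (F 0) * F z) * (1 * k z + z * deriv k z) := by
    intro z hz
    have hFd := (hF.differentiableAt (isOpen_ball.mem_nhds hz)).hasDerivAt
    have hkd := (hk.differentiableAt (isOpen_ball.mem_nhds hz)).hasDerivAt
    have e1 := hFd.sub_const (F 0)
    have e2 := ((hFd.const_mul ((starRingEnd ℂ) (F 0))).const_sub 1).mul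
      ((hasDerivAt_id z).mul hkd)
    have e3 : (fun z => F z - F 0) =ᶠ[nhds z]
        (fun z => (1 - (starRingEnd ℂ) (F 0) * F z) * (z * k z)) := by
      filter_upwards [isOpen_ball.mem_nhds hz] with z hz using hkF z hz
    exact e1.unique (e2.congr_of_eventuallyEq e3)
  have hFd := (hF.differentiableAt (ball_mem_nhds _ one_pos)).hasDerivAt
  have hkd := (hk.differentiableAt (ball_mem_nhds _ one_pos)).hasDerivAt
  have hFd2 := ((hF.deriv isOpen_ball).differentiableAt (ball_mem_nhds (0 : ℂ) one_pos)).hasDerivAt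
  have hkd2 := ((hk.deriv isOpen_ball).differentiableAt (ball_mem_nhds (0 : ℂ) one_pos)).hasDerivAt
  have id0 := hasDerivAt_id (0 : ℂ)
  have e2 := ((hFd2.const_mul ((starRingEnd ℂ) (F 0))).neg.mul (id0.mul hkd)).add
    (((hFd.const_mul ((starRingEnd ℂ) (F 0))).const_sub 1).mul
      ((hkd.const_mul 1).add (id0.mul hkd2)))
  have e3 : deriv F =ᶠ[nhds 0] fun z => -((starRingEnd ℂ) (F 0) * deriv F z) * (z * k z) +
      (1 - (starRingEnd ℂ) (F 0) * F z) * (1 * k z + z * deriv k z) := by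
    filter_upwards [isOpen_ball.mem_nhds hm] with z hz using key z hz
  have e4 := hFd2.unique (e2.congr_of_eventuallyEq e3)
  have e5 := key 0 hm
  simp at e4 e5
  rw [one_sub_conj] at e4 e5
  have hk' := pick_zero hk hk1
  set q : ℝ := 1 - ‖F 0‖ ^ 2
  have hq : 0 < q := by simp only [q]; nlinarith [norm_nonneg (F 0)]
  have e6 : deriv (deriv F) 0 * (q : ℂ) + 2 * (starRingEnd ℂ) (F 0) * (deriv F 0) ^ 2
      = 2 * (q : ℂ) ^ 2 * deriv k 0 := by
    rw [e4, e5]; ring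
  rw [e6, e5]
  simp only [norm_mul, norm_pow, Complex.norm_real, Real.norm_of_nonneg hq.le]
  simp
  nlinarith [mul_le_mul_of_nonneg_left hk' (sq_nonneg q)]

/-- Second-order estimate at a real point. -/
lemma pick_real {f : ℂ → ℂ} (hf : DifferentiableOn ℂ f (ball 0 1))
    (h1 : ∀ z ∈ ball (0 : ℂ) 1, ‖f z‖ < 1) {T : ℝ} (hT : |T| < 1) (b g1 g2 : ℂ)
    (hb : b = f T) (hg1 : g1 = deriv f T * (1 - T ^ 2))
    (hg2 : g2 = deriv (deriv f) T * (1 - T ^ 2) ^ 2 - 2 * T * (1 - T ^ 2) * deriv f T) :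
    ‖g1‖ ≤ 1 - ‖b‖ ^ 2 ∧
    ‖g2 * ((1 - ‖b‖ ^ 2 : ℝ) : ℂ) + 2 * (starRingEnd ℂ) b * g1 ^ 2‖
      ≤ 2 * ((1 - ‖b‖ ^ 2) ^ 2 - ‖g1‖ ^ 2) := by
  set φ : ℂ → ℂ := fun w => (w + T) / (1 + T * w) with hφ
  have hTn : ‖(-T : ℂ)‖ < 1 := by simpa using hT
  have hT2 : T ^ 2 < 1 := by rw [sq_lt_one_iff_abs_lt_one]; exact hT
  have hne : ∀ w ∈ ball (0 : ℂ) 1, 1 + (T : ℂ) * w ≠ 0 := by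
    intro w hw
    have := (mobius_norm_le hTn (mem_ball_zero_iff.1 hw).le).1
    simpa using this
  have hφd : ∀ w ∈ ball (0 : ℂ) 1, HasDerivAt φ ((1 - T ^ 2) / (1 + T * w) ^ 2) w := by
    intro w hw
    have := ((hasDerivAt_id w).add_const (T : ℂ)).div
      (((hasDerivAt_id w).const_mul (T : ℂ)).const_add 1) (hne w hw)
    refine this.congr_deriv ?_
    simp only [id]; ring
  have hφm : ∀ w ∈ ball (0 : ℂ) 1, φ w ∈ ball (0 : ℂ) 1 := by
    intro w hw
    have h := (mobius_norm_le hTn (mem_ball_zero_iff.1 hw).le).2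
    have h' : ∀ w ∈ ball (0 : ℂ) 1, ‖φ w‖ ≤ 1 := by
      intro w hw
      have h := (mobius_norm_le hTn (mem_ball_zero_iff.1 hw).le).2
      simpa [hφ] using h
    rw [mem_ball_zero_iff]
    refine lt_of_le_of_ne (h' w hw) fun he => ?_
    have := const_of_norm_one (fun w hw => (hφd w hw).differentiableAt.differentiableWithinAt)
      h' hw he 0 (mem_ball_self one_pos)
    rw [← this] at he
    simp [hφ] at he
    linarith
  set F : ℂ → ℂ := fun w => f (φ w) with hFdef
  have hFd : ∀ w ∈ ball (0 : ℂ) 1,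
      HasDerivAt F (deriv f (φ w) * ((1 - T ^ 2) / (1 + T * w) ^ 2)) w := fun w hw =>
    HasDerivAt.comp w (hf.differentiableAt (isOpen_ball.mem_nhds (hφm w hw))).hasDerivAt (hφd w hw)
  have hF : DifferentiableOn ℂ F (ball 0 1) :=
    fun w hw => (hFd w hw).differentiableAt.differentiableWithinAt
  have hm : (0 : ℂ) ∈ ball (0 : ℂ) 1 := mem_ball_self one_pos
  have φ0 : φ 0 = T := by simp [hφ]
  have F0 : F 0 = b := by simp [hFdef, φ0, hb]
  have F1 : deriv F 0 = g1 := by rw [(hFd 0 hm).deriv, φ0, hg1]; simp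
  have F2 : deriv (deriv F) 0 = g2 := by
    have e : deriv F =ᶠ[nhds 0] fun w => deriv f (φ w) * ((1 - T ^ 2) / (1 + T * w) ^ 2) := by
      filter_upwards [isOpen_ball.mem_nhds hm] with w hw using (hFd w hw).deriv
    rw [e.deriv_eq]
    have d1 := HasDerivAt.comp (0 : ℂ) ((hf.deriv isOpen_ball).differentiableAt
      (isOpen_ball.mem_nhds (hφm 0 hm))).hasDerivAt (hφd 0 hm)
    have d2 := (hasDerivAt_const (0 : ℂ) (1 - (T : ℂ) ^ 2)).div
      ((((hasDerivAt_id (0 : ℂ)).const_mul (T : ℂ)).const_add 1).pow 2) (by simp)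
    have d3 := (d1.mul d2).deriv
    simp only [φ0] at d3
    refine Eq.trans d3 ?_
    simp [hg2, φ0]; ring
  have hF1 : ∀ z ∈ ball (0 : ℂ) 1, ‖F z‖ ≤ 1 := fun w hw => (h1 _ (hφm w hw)).le
  have A := pick_zero hF hF1
  have B := pick_two hF hF1 (h1 _ (hφm 0 hm))
  rw [F0, F1] at A
  rw [F0, F1, F2] at B
  exact ⟨A, B⟩

/-- A function whose second derivative is at least one grows quadratically. -/
lemma quad_growth {y y1 y2 : ℝ → ℝ} {t0 : ℝ} (h1 : ∀ t, HasDerivAt y (y1 t) t)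
    (h2 : ∀ t, HasDerivAt y1 (y2 t) t) (h : ∀ t, t0 ≤ t → 1 ≤ y2 t) {t : ℝ} (ht : t0 ≤ t) :
    y t0 + y1 t0 * (t - t0) + (t - t0) ^ 2 / 2 ≤ y t := by
  have d1 : ∀ s, HasDerivAt (fun s => y1 s - s) (y2 s - 1) s :=
    fun s => (h2 s).sub (hasDerivAt_id s)
  have m1 : MonotoneOn (fun s => y1 s - s) (Set.Ici t0) := by
    refine monotoneOn_of_deriv_nonneg (convex_Ici t0)
      (fun s _ => (d1 s).continuousAt.continuousWithinAt)
      (fun s _ => (d1 s).differentiableAt.differentiableWithinAt) ?_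
    intro s hs
    rw [interior_Ici] at hs
    rw [(d1 s).deriv]
    linarith [h s (le_of_lt hs)]
  have d2 : ∀ s, HasDerivAt (fun s => y s - y1 t0 * (s - t0) - (s - t0) ^ 2 / 2)
      (y1 s - y1 t0 - (s - t0)) s := by
    intro s
    have := ((h1 s).sub (((hasDerivAt_id s).sub_const t0).const_mul (y1 t0))).sub
      ((((hasDerivAt_id s).sub_const t0).pow 2).div_const 2)
    refine this.congr_deriv ?_
    simp
  have m2 : MonotoneOn (fun s => y s - y1 t0 * (s - t0) - (s - t0) ^ 2 / 2) (Set.Ici t0) := by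
    refine monotoneOn_of_deriv_nonneg (convex_Ici t0)
      (fun s _ => (d2 s).continuousAt.continuousWithinAt)
      (fun s _ => (d2 s).differentiableAt.differentiableWithinAt) ?_
    intro s hs
    rw [interior_Ici] at hs
    rw [(d2 s).deriv]
    have := m1 (Set.self_mem_Ici) (Set.mem_Ici.2 (le_of_lt hs)) (le_of_lt hs)
    simp only at this
    linarith
  have := m2 (Set.self_mem_Ici) (ht : t ∈ Set.Ici t0) ht
  simp only [sub_self] at this
  linarith

lemma tanh_deriv (t : ℝ) : HasDerivAt Real.tanh (1 - Real.tanh t ^ 2) t := by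
  have h := (Real.hasDerivAt_sinh t).div (Real.hasDerivAt_cosh t) (Real.cosh_pos t).ne'
  have e : Real.tanh = fun t => Real.sinh t / Real.cosh t := by
    funext t; exact Real.tanh_eq_sinh_div_cosh t
  rw [e]
  refine h.congr_deriv ?_
  have := (Real.cosh_pos t).ne'
  field_simp

lemma radial_growth {f : ℂ → ℂ} (hf : DifferentiableOn ℂ f (ball 0 1))
    (h1 : ∀ z ∈ ball (0 : ℂ) 1, ‖f z‖ < 1) {t0 : ℝ}
    (hv : ∀ t, t0 ≤ t → 5 / 6 * (1 - ‖f (Real.tanh t : ℂ)‖ ^ 2) ^ 2 ≤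
      ((1 - Real.tanh t ^ 2) * ‖deriv f (Real.tanh t : ℂ)‖) ^ 2) {t : ℝ} (ht : t0 ≤ t) :
    (t - t0) ^ 2 / 2 - 2 * (1 - ‖f (Real.tanh t0 : ℂ)‖ ^ 2)⁻¹ * (t - t0) ≤
      (1 - ‖f (Real.tanh t : ℂ)‖ ^ 2)⁻¹ := by
  set g : ℝ → ℂ := fun t => f (Real.tanh t : ℂ) with hg
  set g1 : ℝ → ℂ := fun t => deriv f (Real.tanh t : ℂ) * (1 - (Real.tanh t : ℂ) ^ 2) with hg1
  set g2 : ℝ → ℂ := fun t => deriv (deriv f) (Real.tanh t : ℂ) * (1 - (Real.tanh t : ℂ) ^ 2) ^ 2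
    - 2 * (Real.tanh t : ℂ) * (1 - (Real.tanh t : ℂ) ^ 2) * deriv f (Real.tanh t : ℂ) with hg2
  have hmem : ∀ t : ℝ, ((Real.tanh t : ℝ) : ℂ) ∈ ball (0 : ℂ) 1 := by
    intro t
    rw [mem_ball_zero_iff, Complex.norm_real]
    exact Real.abs_tanh_lt_one t
  have hT : ∀ t : ℝ, HasDerivAt (fun t : ℝ => ((Real.tanh t : ℝ) : ℂ))
      (1 - (Real.tanh t : ℂ) ^ 2) t := by
    intro t
    have := (tanh_deriv t).ofReal_comp
    refine this.congr_deriv ?_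
    push_cast; rfl
  have hd1 : ∀ t, HasDerivAt g (g1 t) t := fun t =>
    HasDerivAt.comp t (hf.differentiableAt (isOpen_ball.mem_nhds (hmem t))).hasDerivAt (hT t)
  have hd2 : ∀ t, HasDerivAt g1 (g2 t) t := by
    intro t
    have a := HasDerivAt.comp t ((hf.deriv isOpen_ball).differentiableAt
      (isOpen_ball.mem_nhds (hmem t))).hasDerivAt (hT t)
    have b := ((hT t).pow 2).const_sub 1
    refine (a.mul b).congr_deriv ?_
    simp only [hg2, Function.comp, Pi.pow_apply]
    push_cast; ring
  have hlt : ∀ t, 0 < 1 - ‖g t‖ ^ 2 := by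
    intro t
    have := h1 _ (hmem t)
    have h0 := norm_nonneg (g t)
    simp only [hg] at *
    nlinarith
  have hpick := fun t => pick_real hf h1 (Real.abs_tanh_lt_one t) (g t) (g1 t) (g2 t) rfl rfl rfl
  set x : ℝ → ℝ := fun t => (g t).re * (g1 t).re + (g t).im * (g1 t).im with hx
  have hre : ∀ t, HasDerivAt (fun t => (g t).re) (g1 t).re t := fun t =>
    Complex.reCLM.hasFDerivAt.comp_hasDerivAt t (hd1 t)
  have him : ∀ t, HasDerivAt (fun t => (g t).im) (g1 t).im t := fun t =>
    Complex.imCLM.hasFDerivAt.comp_hasDerivAt t (hd1 t)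
  have hre1 : ∀ t, HasDerivAt (fun t => (g1 t).re) (g2 t).re t := fun t =>
    Complex.reCLM.hasFDerivAt.comp_hasDerivAt t (hd2 t)
  have him1 : ∀ t, HasDerivAt (fun t => (g1 t).im) (g2 t).im t := fun t =>
    Complex.imCLM.hasFDerivAt.comp_hasDerivAt t (hd2 t)
  have hns : ∀ z : ℂ, ‖z‖ ^ 2 = z.re * z.re + z.im * z.im := fun z => by
    rw [← Complex.normSq_eq_norm_sq, Complex.normSq_apply]
  have hq : ∀ t, HasDerivAt (fun t => 1 - ‖g t‖ ^ 2) (-(2 * x t)) t := by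
    intro t
    have e : (fun t => 1 - ‖g t‖ ^ 2) = fun t => 1 - ((g t).re * (g t).re + (g t).im * (g t).im) := by
      funext t; rw [hns]
    rw [e]
    refine ((((hre t).mul (hre t)).add ((him t).mul (him t))).const_sub 1).congr_deriv ?_
    simp only [hx]; ring
  have hy1 : ∀ t, HasDerivAt (fun t => (1 - ‖g t‖ ^ 2)⁻¹) (2 * x t / (1 - ‖g t‖ ^ 2) ^ 2) t := by
    intro t
    refine ((hq t).inv (hlt t).ne').congr_deriv ?_
    ring
  have hy2 : ∀ t, HasDerivAt (fun t => 2 * x t / (1 - ‖g t‖ ^ 2) ^ 2)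
      (2 * (‖g1 t‖ ^ 2 + ((g t).re * (g2 t).re + (g t).im * (g2 t).im)) / (1 - ‖g t‖ ^ 2) ^ 2
        + 8 * x t ^ 2 / (1 - ‖g t‖ ^ 2) ^ 3) t := by
    intro t
    have hxd := (((hre t).mul (hre1 t)).add ((him t).mul (him1 t))).const_mul 2
    refine (hxd.div ((hq t).pow 2) (pow_ne_zero 2 (hlt t).ne')).congr_deriv ?_
    have := (hlt t).ne'
    simp only [Pi.add_apply, Pi.mul_apply, Pi.pow_apply]
    change _ = _
    rw [hns (g1 t)]
    field_simp
    simp only [hx]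
    push_cast
    ring
  have main : ∀ t, t0 ≤ t → 1 ≤
      (2 * (‖g1 t‖ ^ 2 + ((g t).re * (g2 t).re + (g t).im * (g2 t).im)) / (1 - ‖g t‖ ^ 2) ^ 2
        + 8 * x t ^ 2 / (1 - ‖g t‖ ^ 2) ^ 3) := by
    intro t ht
    have P := (hpick t).2
    have hv' := hv t ht
    have hg1n : ‖g1 t‖ = (1 - Real.tanh t ^ 2) * ‖deriv f (Real.tanh t : ℂ)‖ := by
      have e : (1 - (Real.tanh t : ℂ) ^ 2) = ((1 - Real.tanh t ^ 2 : ℝ) : ℂ) := by push_cast; rfl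
      simp only [hg1]
      rw [e, norm_mul, Complex.norm_real, Real.norm_of_nonneg
        (by linarith [Real.tanh_sq_lt_one t]), mul_comm]
    rw [← hg1n] at hv'
    change 5 / 6 * (1 - ‖g t‖ ^ 2) ^ 2 ≤ _ at hv'
    set q : ℝ := 1 - ‖g t‖ ^ 2 with hqd
    have hqp : 0 < q := hlt t
    have hq1 : q ≤ 1 := by rw [hqd]; nlinarith [norm_nonneg (g t)]
    set A : ℂ := g2 t * (q : ℂ) + 2 * (starRingEnd ℂ) (g t) * g1 t ^ 2 with hA
    have hre : -‖A‖ ≤ ((starRingEnd ℂ) (g t) * ((starRingEnd ℂ) 1 * A)).re := by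
      have := Complex.abs_re_le_norm ((starRingEnd ℂ) (g t) * ((starRingEnd ℂ) 1 * A))
      rw [norm_mul, RCLike.norm_conj] at this
      simp only [map_one, one_mul] at this ⊢
      have h3 := h1 _ (hmem t)
      change ‖g t‖ < 1 at h3
      have := (abs_le.1 this).1
      nlinarith [norm_nonneg A, norm_nonneg (g t)]
    have hid : 2 * (‖g1 t‖ ^ 2 + ((g t).re * (g2 t).re + (g t).im * (g2 t).im)) * q
        + 8 * x t ^ 2 = 2 * ‖g1 t‖ ^ 2 * (2 - q)
          + 2 * ((starRingEnd ℂ) (g t) * ((starRingEnd ℂ) 1 * A)).re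
          + 2 * ‖g1 t‖ ^ 2 * (1 - q - ‖g t‖ ^ 2) := by
      have hqq : q = 1 - ((g t).re * (g t).re + (g t).im * (g t).im) := by rw [hqd, hns]
      rw [hns (g1 t), hns (g t)]
      simp only [hA, hx]
      simp [pow_two]
      rw [hqq]
      ring
    have e : (2 * (‖g1 t‖ ^ 2 + ((g t).re * (g2 t).re + (g t).im * (g2 t).im)) / q ^ 2
        + 8 * x t ^ 2 / q ^ 3) = (2 * (‖g1 t‖ ^ 2 + ((g t).re * (g2 t).re + (g t).im * (g2 t).im)) * q
        + 8 * x t ^ 2) / q ^ 3 := by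
      field_simp
    rw [e, hid, le_div_iff₀ (by positivity)]
    have e2 : 1 - q - ‖g t‖ ^ 2 = 0 := by rw [hqd]; ring
    rw [e2]
    have : q ^ 3 ≤ q ^ 2 := by nlinarith [sq_nonneg q]
    nlinarith [sq_nonneg ‖g1 t‖, mul_nonneg (sq_nonneg ‖g1 t‖) (sub_nonneg.2 hq1)]
  have fin := quad_growth hy1 hy2 main ht
  have hx0 : -(2 * (1 - ‖g t0‖ ^ 2)⁻¹) ≤ 2 * x t0 / (1 - ‖g t0‖ ^ 2) ^ 2 := by
    have hP := (hpick t0).1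
    have hqp := hlt t0
    have hx1 : -(1 - ‖g t0‖ ^ 2) ≤ x t0 := by
      have e : x t0 = ((starRingEnd ℂ) (g t0) * g1 t0).re := by simp [hx]
      have := Complex.abs_re_le_norm ((starRingEnd ℂ) (g t0) * g1 t0)
      rw [norm_mul, RCLike.norm_conj, ← e] at this
      have h3 := h1 _ (hmem t0)
      change ‖g t0‖ < 1 at h3
      have := (abs_le.1 this).1
      nlinarith [norm_nonneg (g1 t0), norm_nonneg (g t0)]
    rw [le_div_iff₀ (by positivity)]
    have : -(2 * (1 - ‖g t0‖ ^ 2)⁻¹) * (1 - ‖g t0‖ ^ 2) ^ 2 = -2 * (1 - ‖g t0‖ ^ 2) := by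
      field_simp
    rw [this]
    linarith
  have hpos : 0 < (1 - ‖g t0‖ ^ 2)⁻¹ := inv_pos.2 (hlt t0)
  have := mul_le_mul_of_nonneg_right hx0 (sub_nonneg.2 ht)
  change _ ≤ (1 - ‖g t‖ ^ 2)⁻¹
  change _ - 2 * (1 - ‖g t0‖ ^ 2)⁻¹ * _ ≤ _
  linarith

lemma ev_bd {P : ℂ → Prop} :
    (∀ᶠ z in Filter.comap (fun z : ℂ => ‖z‖) (nhdsWithin 1 (Set.Iio 1)), P z) ↔
      ∃ r : ℝ, 0 < r ∧ r < 1 ∧ ∀ z : ℂ, r < ‖z‖ → ‖z‖ < 1 → P z := by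
  rw [Filter.eventually_comap]
  constructor
  · intro h
    obtain ⟨l, hl, hs⟩ := (mem_nhdsLT_iff_exists_Ioo_subset' (zero_lt_one (α := ℝ))).1 h
    have hl1 : l < 1 := hl
    refine ⟨max l (1 / 2), by positivity, by simp [hl1]; norm_num, fun z h1 h2 => ?_⟩
    exact hs ⟨lt_of_le_of_lt (le_max_left _ _) h1, h2⟩ z rfl
  · rintro ⟨r, -, hr, h⟩
    filter_upwards [Ioo_mem_nhdsLT hr] with x hx z hz
    subst hz
    exact h z hx.1 hx.2

lemma norm_tendsto_one {f : ℂ → ℂ} (hf : DifferentiableOn ℂ f (ball 0 1))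
    (h1 : ∀ z ∈ ball (0 : ℂ) 1, ‖f z‖ < 1)
    (hlim : Tendsto (fun z : ℂ => (1 - ‖z‖ ^ 2) * ‖deriv f z‖ / (1 - ‖f z‖ ^ 2))
      (Filter.comap (fun z : ℂ => ‖z‖) (nhdsWithin 1 (Set.Iio 1))) (nhds 1)) :
    Tendsto (fun z => ‖f z‖) (Filter.comap (fun z : ℂ => ‖z‖) (nhdsWithin 1 (Set.Iio 1)))
      (nhds 1) := by
  have hq : ∀ z ∈ ball (0 : ℂ) 1, 0 < 1 - ‖f z‖ ^ 2 := by
    intro z hz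
    nlinarith [h1 z hz, norm_nonneg (f z)]
  obtain ⟨r, hr0, hr1, hr⟩ := ev_bd.1 ((tendsto_order.1 hlim).1 (19 / 20) (by norm_num))
  obtain ⟨r1, hrr1, hr11⟩ := exists_between hr1
  have hr1m : r1 ∈ Set.Ioo (-1 : ℝ) 1 := ⟨by linarith, hr11⟩
  set t0 := Real.artanh r1
  have ht0 : Real.tanh t0 = r1 := Real.tanh_artanh hr1m
  obtain ⟨M, hM⟩ : ∃ M : ℝ, ∀ z ∈ sphere (0 : ℂ) r1, (1 - ‖f z‖ ^ 2)⁻¹ ≤ M := by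
    have hc : ContinuousOn (fun z => (1 - ‖f z‖ ^ 2)⁻¹) (sphere (0 : ℂ) r1) := by
      have hs : sphere (0 : ℂ) r1 ⊆ ball 0 1 := fun z hz => by
        rw [mem_sphere_zero_iff_norm] at hz
        rw [mem_ball_zero_iff]; linarith
      refine ContinuousOn.inv₀ ?_ (fun z hz => (hq z (hs hz)).ne')
      exact continuousOn_const.sub ((hf.continuousOn.mono hs).norm.pow 2)
    obtain ⟨M, hM⟩ := (isCompact_sphere (0 : ℂ) r1).bddAbove_image hc
    exact ⟨M, fun z hz => hM (Set.mem_image_of_mem _ hz)⟩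
  have hgrow : ∀ t, t0 ≤ t → ∀ ζ : ℂ, ‖ζ‖ = 1 →
      (t - t0) ^ 2 / 2 - 2 * M * (t - t0) ≤ (1 - ‖f (ζ * (Real.tanh t : ℂ))‖ ^ 2)⁻¹ := by
    intro t ht ζ hζ
    have hmaps : ∀ w ∈ ball (0 : ℂ) 1, ζ * w ∈ ball (0 : ℂ) 1 := by
      intro w hw
      rw [mem_ball_zero_iff] at *
      rwa [norm_mul, hζ, one_mul]
    have hder : ∀ w ∈ ball (0 : ℂ) 1, HasDerivAt (fun w => f (ζ * w)) (deriv f (ζ * w) * ζ) w := by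
      intro w hw
      have := HasDerivAt.comp w (hf.differentiableAt (isOpen_ball.mem_nhds (hmaps w hw))).hasDerivAt
        ((hasDerivAt_id w).const_mul ζ)
      rw [mul_one] at this
      exact this
    have R := radial_growth (f := fun w => f (ζ * w)) (t0 := t0)
      (fun w hw => (hder w hw).differentiableAt.differentiableWithinAt)
      (fun w hw => h1 _ (hmaps w hw)) (by
        intro s hs
        have hsm : ((Real.tanh s : ℝ) : ℂ) ∈ ball (0 : ℂ) 1 := by
          rw [mem_ball_zero_iff, Complex.norm_real]
          exact Real.abs_tanh_lt_one s
        have hsr : r1 ≤ Real.tanh s := by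
          rw [← Real.artanh_le_artanh_iff hr1m ⟨Real.neg_one_lt_tanh s, Real.tanh_lt_one s⟩,
            Real.artanh_tanh]
          exact hs
        have hn : ‖ζ * (Real.tanh s : ℂ)‖ = Real.tanh s := by
          rw [norm_mul, hζ, one_mul, Complex.norm_real, Real.norm_of_nonneg (by linarith)]
        have h2 := hr (ζ * (Real.tanh s : ℂ)) (by rw [hn]; linarith)
          (by rw [hn]; exact Real.tanh_lt_one s)
        rw [(hder _ hsm).deriv, norm_mul, hζ, mul_one]
        rw [hn] at h2
        have hq' := hq _ (hmaps _ hsm)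
        rw [lt_div_iff₀ hq'] at h2
        have := mul_self_le_mul_self (by positivity) h2.le
        nlinarith [sq_nonneg (1 - ‖f (ζ * (Real.tanh s : ℂ))‖ ^ 2)]) ht
    have hM' := hM (ζ * (Real.tanh t0 : ℂ)) (by
      rw [mem_sphere_zero_iff_norm, norm_mul, hζ, one_mul, Complex.norm_real, ht0,
        Real.norm_of_nonneg (by linarith)])
    have := mul_le_mul_of_nonneg_right hM' (sub_nonneg.2 ht)
    linarith
  rw [tendsto_order]
  constructor
  · intro c hc
    obtain ⟨d, hd, hd1⟩ : ∃ d : ℝ, max c 0 < d ∧ d < 1 := exists_between (by simp [hc])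
    have hd0 : 0 < d := lt_of_le_of_lt (le_max_right _ _) hd
    have hcd : c < d := lt_of_le_of_lt (le_max_left _ _) hd
    have hd2 : 0 < 1 - d ^ 2 := by nlinarith
    set K : ℝ := (1 - d ^ 2)⁻¹
    have hK : 0 < K := inv_pos.2 hd2
    set S : ℝ := t0 + 4 * |M| + 2 * K + 1 with hS
    rw [ev_bd]
    have hSt : r1 ≤ Real.tanh S := by
      rw [← Real.artanh_le_artanh_iff hr1m ⟨Real.neg_one_lt_tanh S, Real.tanh_lt_one S⟩,
            Real.artanh_tanh]
      change t0 ≤ S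
      linarith [abs_nonneg M]
    refine ⟨Real.tanh S, by linarith, Real.tanh_lt_one S, fun z hz hz1 => ?_⟩
    have hzm : ‖z‖ ∈ Set.Ioo (-1 : ℝ) 1 := ⟨by linarith [norm_nonneg z], hz1⟩
    have hz0 : (‖z‖ : ℂ) ≠ 0 := by
      have : 0 < ‖z‖ := by linarith
      exact_mod_cast this.ne'
    have ht : S ≤ Real.artanh ‖z‖ := by
      have := (Real.artanh_le_artanh_iff ⟨Real.neg_one_lt_tanh S, Real.tanh_lt_one S⟩ hzm).2 hz.le
      rwa [Real.artanh_tanh] at this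
    have h2 := hgrow (Real.artanh ‖z‖) (by linarith [abs_nonneg M]) (z / ‖z‖) (by
      rw [norm_div, Complex.norm_real, norm_norm]
      exact div_self (by exact_mod_cast hz0))
    rw [Real.tanh_artanh hzm, div_mul_cancel₀ _ hz0] at h2
    set τ := Real.artanh ‖z‖ - t0 with hτ
    have hτ1 : 4 * |M| + 2 * K + 1 ≤ τ := by linarith
    have hKle : K ≤ (1 - ‖f z‖ ^ 2)⁻¹ := by
      have hMM := le_abs_self M
      have hM0 := abs_nonneg M
      have : K ≤ τ ^ 2 / 2 - 2 * M * τ := by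
        have e1 : M * τ ≤ |M| * τ := mul_le_mul_of_nonneg_right hMM (by linarith)
        nlinarith
      linarith
    have hqz := hq z (mem_ball_zero_iff.2 hz1)
    have := (inv_le_inv₀ hd2 hqz).1 hKle
    have : d ^ 2 ≤ ‖f z‖ ^ 2 := by linarith
    have := (sq_le_sq₀ hd0.le (norm_nonneg _)).1 this
    linarith
  · intro c hc
    rw [ev_bd]
    refine ⟨1 / 2, by norm_num, by norm_num, fun z _ hz => ?_⟩
    exact (h1 z (mem_ball_zero_iff.2 hz)).trans hc

lemma norm_le_one_of_bd {u : ℂ → ℂ} (hu : DifferentiableOn ℂ u (ball 0 1))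
    (h : Tendsto (fun z => ‖u z‖) (Filter.comap (fun z : ℂ => ‖z‖) (nhdsWithin 1 (Set.Iio 1)))
      (nhds 1)) : ∀ z ∈ ball (0 : ℂ) 1, ‖u z‖ ≤ 1 := by
  intro z hz
  rw [mem_ball_zero_iff] at hz
  refine le_of_forall_pos_le_add fun ε hε => ?_
  obtain ⟨r, hr0, hr1, hr⟩ := ev_bd.1 ((tendsto_order.1 h).2 (1 + ε) (by linarith))
  obtain ⟨R, hR, hR1⟩ : ∃ R : ℝ, max r ‖z‖ < R ∧ R < 1 := exists_between (by simp [hr1, hz])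
  have hrR : r < R := lt_of_le_of_lt (le_max_left _ _) hR
  have hzR : ‖z‖ < R := lt_of_le_of_lt (le_max_right _ _) hR
  refine Complex.norm_le_of_forall_mem_frontier_norm_le (U := ball (0 : ℂ) R) isBounded_ball
    ?_ ?_ (subset_closure (mem_ball_zero_iff.2 hzR))
  · refine (hu.mono ?_).diffContOnCl
    rw [closure_ball _ (by linarith)]
    exact closedBall_subset_ball hR1
  · intro w hw
    rw [frontier_ball _ (by linarith), mem_sphere_zero_iff_norm] at hw
    exact (hr w (by linarith) (by linarith)).le

lemma mobius_identity (a z : ℂ) : ‖1 - (starRingEnd ℂ) a * z‖ ^ 2 - ‖a - z‖ ^ 2 =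
    (1 - ‖a‖ ^ 2) * (1 - ‖z‖ ^ 2) := by
  simp only [← Complex.normSq_eq_norm_sq, Complex.normSq_apply]
  simp
  ring

lemma mobius_tendsto {a : ℂ} (ha : ‖a‖ < 1) :
    Tendsto (fun z => ‖(a - z) / (1 - (starRingEnd ℂ) a * z)‖)
      (Filter.comap (fun z : ℂ => ‖z‖) (nhdsWithin 1 (Set.Iio 1))) (nhds 1) := by
  have hlow : Tendsto (fun z : ℂ => 1 - (1 - ‖z‖ ^ 2) / (1 - ‖a‖) ^ 2)
      (Filter.comap (fun z : ℂ => ‖z‖) (nhdsWithin 1 (Set.Iio 1))) (nhds 1) := by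
    have hn : Tendsto (fun z : ℂ => ‖z‖)
      (Filter.comap (fun z : ℂ => ‖z‖) (nhdsWithin 1 (Set.Iio 1))) (nhds 1) :=
      tendsto_comap.mono_right nhdsWithin_le_nhds
    have := (((hn.pow 2).const_sub 1).div_const ((1 - ‖a‖) ^ 2)).const_sub 1
    simpa using this
  have hall : ∀ z : ℂ, ‖z‖ < 1 → ‖(a - z) / (1 - (starRingEnd ℂ) a * z)‖ ≤ 1 ∧
      1 - (1 - ‖z‖ ^ 2) / (1 - ‖a‖) ^ 2 ≤ ‖(a - z) / (1 - (starRingEnd ℂ) a * z)‖ := by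
    intro z hz
    obtain ⟨hne, hle⟩ := mobius_norm_le ha hz.le
    have hle' : ‖(a - z) / (1 - (starRingEnd ℂ) a * z)‖ ≤ 1 := by
      rwa [norm_div, norm_sub_rev, ← norm_div]
    refine ⟨hle', ?_⟩
    have hid := mobius_identity a z
    have hD : 1 - ‖a‖ ≤ ‖1 - (starRingEnd ℂ) a * z‖ := by
      have h := norm_sub_norm_le (1 : ℂ) ((starRingEnd ℂ) a * z)
      rw [norm_one, norm_mul, RCLike.norm_conj] at h
      nlinarith [norm_nonneg a]
    have hDpos : 0 < ‖1 - (starRingEnd ℂ) a * z‖ := norm_pos_iff.2 hne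
    have hsq : 1 - (1 - ‖z‖ ^ 2) / (1 - ‖a‖) ^ 2 ≤
        ‖(a - z) / (1 - (starRingEnd ℂ) a * z)‖ ^ 2 := by
      have e : ‖(a - z) / (1 - (starRingEnd ℂ) a * z)‖ ^ 2 =
          1 - ((1 - ‖a‖ ^ 2) * (1 - ‖z‖ ^ 2)) / ‖1 - (starRingEnd ℂ) a * z‖ ^ 2 := by
        rw [norm_div, ← hid, div_pow, sub_div, div_self (pow_ne_zero 2 hDpos.ne')]
        ring
      rw [e]
      have hz2 : 0 ≤ 1 - ‖z‖ ^ 2 := by nlinarith [norm_nonneg z]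
      have ha2 : (1 - ‖a‖ ^ 2) * (1 - ‖z‖ ^ 2) ≤ 1 - ‖z‖ ^ 2 := by nlinarith [sq_nonneg ‖a‖]
      have h1a : 0 < 1 - ‖a‖ := by linarith
      have : ((1 - ‖a‖ ^ 2) * (1 - ‖z‖ ^ 2)) / ‖1 - (starRingEnd ℂ) a * z‖ ^ 2 ≤
          (1 - ‖z‖ ^ 2) / (1 - ‖a‖) ^ 2 := by
        gcongr
      linarith
    nlinarith [norm_nonneg ((a - z) / (1 - (starRingEnd ℂ) a * z))]
  refine tendsto_of_tendsto_of_tendsto_of_le_of_le' hlow tendsto_const_nhds ?_ ?_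
  · exact ev_bd.2 ⟨1 / 2, by norm_num, by norm_num, fun z _ hz => (hall z hz).2⟩
  · exact ev_bd.2 ⟨1 / 2, by norm_num, by norm_num, fun z _ hz => (hall z hz).1⟩

lemma blaschke_core {r : ℝ} (hr1 : r < 1) {p : ℂ} (hrp : r < ‖p‖) (hp : ‖p‖ < 1) {ρ : ℝ}
    (hρ0 : 0 < ρ)
    (hρ : ∀ a : ℂ, ‖a‖ ≤ r → ‖(a - p) / (1 - (starRingEnd ℂ) a * p)‖ ≤ ρ) (N : ℕ) :
    ∀ f : ℂ → ℂ, DifferentiableOn ℂ f (ball 0 1) →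
      Tendsto (fun z => ‖f z‖) (Filter.comap (fun z : ℂ => ‖z‖) (nhdsWithin 1 (Set.Iio 1)))
        (nhds 1) →
      (∀ z, r < ‖z‖ → ‖z‖ < 1 → f z ≠ 0) → ρ ^ N < ‖f p‖ →
      ∃ (n : ℕ) (η : ℂ) (a : Fin n → ℂ), ‖η‖ = 1 ∧ (∀ j, ‖a j‖ < 1) ∧
        ∀ z ∈ Metric.ball (0 : ℂ) 1,
          f z = η * ∏ j, (a j - z) / (1 - (starRingEnd ℂ) (a j) * z) := by
  induction N with
  | zero =>
    intro f hf hlim _ hfp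
    have := norm_le_one_of_bd hf hlim p (mem_ball_zero_iff.2 hp)
    rw [pow_zero] at hfp
    linarith
  | succ N ih =>
    intro f hf hlim hnz hfp
    by_cases hz : ∃ a ∈ ball (0 : ℂ) 1, f a = 0
    · obtain ⟨a, ha, hfa⟩ := hz
      have ha1 := mem_ball_zero_iff.1 ha
      have har : ‖a‖ ≤ r := by
        by_contra! h
        exact hnz a h ha1 hfa
      have hne : ∀ z : ℂ, ‖z‖ < 1 → 1 - (starRingEnd ℂ) a * z ≠ 0 :=
        fun z hz => (mobius_norm_le ha1 hz.le).1
      set g : ℂ → ℂ := fun z => -(dslope f a z * (1 - (starRingEnd ℂ) a * z)) with hg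
      have hfac : ∀ z : ℂ, ‖z‖ < 1 → f z = (a - z) / (1 - (starRingEnd ℂ) a * z) * g z := by
        intro z hz
        have h1 := sub_smul_dslope f a z
        rw [hfa, sub_zero, smul_eq_mul] at h1
        rw [← h1, hg]
        have := hne z hz
        beta_reduce
        generalize 1 - (starRingEnd ℂ) a * z = c at this ⊢
        field_simp
        ring
      have hgd : DifferentiableOn ℂ g (ball 0 1) := by
        refine DifferentiableOn.neg (DifferentiableOn.mul ?_ ?_)
        · exact (Complex.differentiableOn_dslope (isOpen_ball.mem_nhds ha)).2 hf
        · fun_prop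
      have hglim : Tendsto (fun z => ‖g z‖)
          (Filter.comap (fun z : ℂ => ‖z‖) (nhdsWithin 1 (Set.Iio 1))) (nhds 1) := by
        have h := hlim.div (mobius_tendsto ha1) one_ne_zero
        rw [div_one] at h
        refine h.congr' ?_
        refine ev_bd.2 ⟨max r (1 / 2), by positivity, by simp [hr1]; norm_num, fun z hz hz1 => ?_⟩
        have h1 := hfac z hz1
        have h2 : (a - z) / (1 - (starRingEnd ℂ) a * z) ≠ 0 := by
          intro h0
          rw [h0, zero_mul] at h1
          exact hnz z (lt_of_le_of_lt (le_max_left _ _) hz) hz1 h1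
        change ‖f z‖ / _ = _
        rw [h1, norm_mul]
        exact mul_div_cancel_left₀ _ (norm_ne_zero_iff.2 h2)
      obtain ⟨n, η, b, hη, hb, hB⟩ := ih g hgd hglim (fun z h1 h2 h3 => by
        apply hnz z h1 h2
        rw [hfac z h2, h3, mul_zero]) (by
        rw [hfac p hp, norm_mul, pow_succ] at hfp
        have h1 := hρ a har
        have h2 := norm_nonneg (g p)
        by_contra! h3
        nlinarith [mul_le_mul_of_nonneg_right h1 h2])
      refine ⟨n + 1, η, Fin.cons a b, hη, ?_, ?_⟩
      · intro j
        refine Fin.cases ?_ (fun i => ?_) j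
        · simpa using ha1
        · simpa using hb i
      · intro z hz
        rw [hfac z (mem_ball_zero_iff.1 hz), hB z hz, Fin.prod_univ_succ]
        simp only [Fin.cons_zero, Fin.cons_succ]
        ring
    · push Not at hz
      have hle := norm_le_one_of_bd hf hlim
      have hinv := norm_le_one_of_bd (u := fun z => (f z)⁻¹) (hf.inv hz) (by
        simpa using hlim.inv₀ one_ne_zero)
      have hm : (0 : ℂ) ∈ ball (0 : ℂ) 1 := mem_ball_self one_pos
      have h0 : ‖f 0‖ = 1 := by
        refine le_antisymm (hle 0 hm) ?_
        have := hinv 0 hm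
        rw [norm_inv] at this
        exact (inv_le_one₀ (norm_pos_iff.2 (hz 0 hm))).1 this
      refine ⟨0, f 0, Fin.elim0, h0, fun j => j.elim0, fun z hz => ?_⟩
      rw [const_of_norm_one hf hle hm h0 z hz]
      simp

/-- **Heins' characterization of finite Blaschke products.** If `f` is a nonconstant
holomorphic function from the open unit disk into the closed unit disk such that
`(1 − |z|²)|f'(z)|/(1 − |f(z)|²) → 1` as `|z| → 1⁻`, then `f` is a finite Blaschke
product: `f(z) = η ∏_{j=1}^n (z_j − z)/(1 − conj z_j · z)` for some `n ≥ 1`,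
`|η| = 1` and points `z_j` in the open unit disk. -/
theorem heins_characterization (f : ℂ → ℂ)
    (hf_diff : ∀ z ∈ Metric.ball (0 : ℂ) 1, DifferentiableAt ℂ f z)
    (hf_le : ∀ z ∈ Metric.ball (0 : ℂ) 1, ‖f z‖ ≤ 1)
    (hf_nc : ∃ z ∈ Metric.ball (0 : ℂ) 1, ∃ w ∈ Metric.ball (0 : ℂ) 1, f z ≠ f w)
    (hlim : Tendsto (fun z : ℂ => (1 - ‖z‖ ^ 2) * ‖deriv f z‖ / (1 - ‖f z‖ ^ 2))
      (Filter.comap (fun z : ℂ => ‖z‖) (nhdsWithin 1 (Set.Iio 1))) (nhds 1)) :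
    ∃ (n : ℕ) (η : ℂ) (a : Fin n → ℂ), 1 ≤ n ∧ ‖η‖ = 1 ∧ (∀ j, ‖a j‖ < 1) ∧
      ∀ z ∈ Metric.ball (0 : ℂ) 1,
        f z = η * ∏ j, (a j - z) / (1 - (starRingEnd ℂ) (a j) * z) := by
  have hd : DifferentiableOn ℂ f (ball 0 1) :=
    fun z hz => (hf_diff z hz).differentiableWithinAt
  have h1 : ∀ z ∈ ball (0 : ℂ) 1, ‖f z‖ < 1 := by
    intro c hc
    refine lt_of_le_of_ne (hf_le c hc) fun h => ?_
    obtain ⟨z, hz, w, hw, hzw⟩ := hf_nc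
    have hcst := const_of_norm_one hd hf_le hc h
    exact hzw ((hcst z hz).trans (hcst w hw).symm)
  have hN := norm_tendsto_one hd h1 hlim
  obtain ⟨r, hr0, hr1, hr⟩ := ev_bd.1 ((tendsto_order.1 hN).1 (1 / 2) (by norm_num))
  obtain ⟨p, hrp, hp1⟩ := exists_between hr1
  have hpn : ‖(p : ℂ)‖ = p := by
    rw [Complex.norm_real, Real.norm_of_nonneg (by linarith)]
  have hnz : ∀ z, r < ‖z‖ → ‖z‖ < 1 → f z ≠ 0 := by
    intro z hz hz1 h0
    have := hr z hz hz1
    rw [h0, norm_zero] at this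
    linarith
  set δ : ℝ := (1 - r ^ 2) * (1 - p ^ 2) / 4 with hδ
  have hr2 : 0 < 1 - r ^ 2 := by nlinarith
  have hp2 : 0 < 1 - p ^ 2 := by nlinarith
  have hδ0 : 0 < δ := by positivity
  have hδ1 : δ < 1 := by
    rw [hδ]
    have : (1 - r ^ 2) * (1 - p ^ 2) ≤ 1 * 1 := by
      gcongr <;> nlinarith
    linarith
  have hρ : ∀ a : ℂ, ‖a‖ ≤ r → ‖(a - p) / (1 - (starRingEnd ℂ) a * p)‖ ≤ Real.sqrt (1 - δ) := by
    intro a ha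
    apply Real.le_sqrt_of_sq_le
    have hne := (mobius_norm_le (b := a) (w := p) (by linarith) (by linarith)).1
    have hpos := norm_pos_iff.2 hne
    have hid := mobius_identity a p
    rw [hpn] at hid
    have hD : ‖1 - (starRingEnd ℂ) a * p‖ ≤ 2 := by
      have h := norm_sub_le (1 : ℂ) ((starRingEnd ℂ) a * p)
      rw [norm_one, norm_mul, RCLike.norm_conj, hpn] at h
      nlinarith [norm_nonneg a]
    have hD2 : ‖1 - (starRingEnd ℂ) a * p‖ ^ 2 ≤ 4 := by nlinarith
    rw [norm_div, div_pow, div_le_iff₀ (by positivity)]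
    have ha2 : ‖a‖ ^ 2 ≤ r ^ 2 := by nlinarith [norm_nonneg a]
    have h5 : (1 - r ^ 2) * (1 - p ^ 2) ≤ (1 - ‖a‖ ^ 2) * (1 - p ^ 2) := by gcongr
    nlinarith [mul_le_mul_of_nonneg_left hD2 hδ0.le]
  have hρ0 : 0 < Real.sqrt (1 - δ) := Real.sqrt_pos.2 (by linarith)
  have hρ1 : Real.sqrt (1 - δ) < 1 := by
    rw [Real.sqrt_lt' one_pos]; linarith
  have hfp : 0 < ‖f p‖ := norm_pos_iff.2 (hnz p (by linarith) (by linarith))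
  obtain ⟨N, hNN⟩ := exists_pow_lt_of_lt_one hfp hρ1
  obtain ⟨n, η, a, hη, ha, hfz⟩ := blaschke_core hr1 (p := (p : ℂ)) (by linarith) (by linarith)
    hρ0 hρ N f hd hN hnz hNN
  refine ⟨n, η, a, ?_, hη, ha, hfz⟩
  rcases Nat.eq_zero_or_pos n with rfl | h
  · exfalso
    obtain ⟨z, hz, w, hw, hzw⟩ := hf_nc
    apply hzw
    rw [hfz z hz, hfz w hw]
    simp
  · exact h
end
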